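/- arXiv:2506.24067 — 2 statements merged into one kernel-verified Lean document; each statement's English description precedes it below -/
import Mathlib

section
/- Let n ≥ 2 and N ≥ 1. Fix x₀ ∈ ℝⁿ with |x₀| = 1 and a unit vector v₀ ∈ ℝⁿ with ⟪x₀, v₀⟫ = 0. Let A : ℝⁿ × ℝⁿ × ℝⁿ → Matrix (Fin N) (Fin N) ℂ be real-analytic, and let f : ℝⁿ → ℂ^N be continuous with support contained in the closed unit ball {x ∈ ℝⁿ : |x| ≤ 1}. Suppose there exists δ > 0 such that for every unit vector v ∈ ℝⁿ with |v − v₀| < δ, every p ∈ ℝⁿ with ⟪p, v⟫ = 0 and |p − x₀| < δ, and every differentiable U : ℝ → Matrix (Fin N) (Fin N) ℂ with U′(t) = −A(p, v, p + t v) · U(t) for all t ∈ ℝ, U(0) = Id, and U(t) invertible for all t ∈ ℝ, one has ∫_ℝ U(t)⁻¹ · f(p + t v) dt = 0. Then there exists ε > 0 such that f = 0 on the ball {x ∈ ℝⁿ : |x − x₀| < ε}. -/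
section Helpers
open MeasureTheory Set
set_option linter.all false


section ODE
variable {E : Type*} [NormedAddCommGroup E] [NormedSpace ℝ E]

noncomputable def dys (B : ℝ → E →L[ℝ] E) (y0 : E) : ℕ → ℝ → E
  | 0 => fun _ => y0
  | n + 1 => fun t => ∫ s in (0:ℝ)..t, B s (dys B y0 n s)

lemma dys_cont (B : ℝ → E →L[ℝ] E) (hB : Continuous B) (y0 : E) (n : ℕ) :
    Continuous (dys B y0 n) := by
  induction n with
  | zero => exact continuous_const
  | succ n ih =>
    exact intervalIntegral.continuous_primitive
      (fun a b => (hB.clm_apply ih).intervalIntegrable a b) 0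

lemma dys_deriv [CompleteSpace E] (B : ℝ → E →L[ℝ] E) (hB : Continuous B) (y0 : E) (n : ℕ) (t : ℝ) :
    HasDerivAt (dys B y0 (n+1)) (B t (dys B y0 n t)) t := by
  have h := hB.clm_apply (dys_cont B hB y0 n)
  exact intervalIntegral.integral_hasDerivAt_right (h.intervalIntegrable _ _)
    h.stronglyMeasurable.stronglyMeasurableAtFilter h.continuousAt

lemma dys_bound (B : ℝ → E →L[ℝ] E) (y0 : E) (T K : ℝ)
    (hK : ∀ t, |t| ≤ T → ‖B t‖ ≤ K) (hK0 : 0 ≤ K) (n : ℕ) :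
    ∀ t, |t| ≤ T → ‖dys B y0 n t‖ ≤ ‖y0‖ * (K ^ n * |t| ^ n / n.factorial) := by
  induction n with
  | zero => intro t _; simp [dys]
  | succ n ih =>
    intro t ht
    have key : ∀ s, |s| ≤ T → ‖B s (dys B y0 n s)‖ ≤ (‖y0‖ * K ^ (n+1) / n.factorial) * |s| ^ n := by
      intro s hs
      calc ‖B s (dys B y0 n s)‖ ≤ ‖B s‖ * ‖dys B y0 n s‖ := (B s).le_opNorm _
        _ ≤ K * (‖y0‖ * (K ^ n * |s| ^ n / n.factorial)) := by
          gcongr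
          · exact hK s hs
          · exact ih s hs
        _ = _ := by ring
    have hfac : ((n+1).factorial : ℝ) = (n+1) * n.factorial := by
      push_cast [Nat.factorial_succ]; ring
    have hfac0 : (n.factorial : ℝ) ≠ 0 := by positivity
    have hn0 : (n + 1 : ℝ) ≠ 0 := by positivity
    simp only [dys]
    rcases le_total 0 t with h0 | h0
    · have := intervalIntegral.norm_integral_le_of_norm_le (μ := volume) (a := 0) (b := t)
        (f := fun s => B s (dys B y0 n s)) (g := fun s => (‖y0‖ * K ^ (n+1) / n.factorial) * s ^ n) h0
        (by
          refine Filter.Eventually.of_forall fun s hs => ?_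
          have h2 := key s (by rw [abs_of_nonneg hs.1.le]; rw [abs_of_nonneg h0] at ht; linarith [hs.2])
          rwa [abs_of_nonneg hs.1.le] at h2)
        (by apply Continuous.intervalIntegrable; fun_prop)
      refine this.trans (le_of_eq ?_)
      rw [intervalIntegral.integral_const_mul, integral_pow, abs_of_nonneg h0, hfac]
      field_simp
      simp
    · rw [intervalIntegral.integral_symm, norm_neg]
      have := intervalIntegral.norm_integral_le_of_norm_le (μ := volume) (a := t) (b := 0)
        (f := fun s => B s (dys B y0 n s)) (g := fun s => (‖y0‖ * K ^ (n+1) / n.factorial) * (-s) ^ n) h0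
        (by
          refine Filter.Eventually.of_forall fun s hs => ?_
          have h2 := key s (by rw [abs_of_nonpos hs.2]; rw [abs_of_nonpos h0] at ht; linarith [hs.1])
          rwa [abs_of_nonpos hs.2] at h2)
        (by apply Continuous.intervalIntegrable; fun_prop)
      refine this.trans (le_of_eq ?_)
      rw [intervalIntegral.integral_const_mul,
        intervalIntegral.integral_comp_neg (fun s => s ^ n), integral_pow, abs_of_nonpos h0, hfac]
      field_simp
      simp

lemma ode_exists [CompleteSpace E] (B : ℝ → E →L[ℝ] E) (hB : Continuous B) (y0 : E) :
    ∃ y : ℝ → E, y 0 = y0 ∧ (∀ t, HasDerivAt y (B t (y t)) t) ∧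
      ∀ t, HasSum (fun n => dys B y0 n t) (y t) := by
  have hbd : ∀ T : ℝ, ∃ K, 0 ≤ K ∧ ∀ t, |t| ≤ T → ‖B t‖ ≤ K := by
    intro T
    obtain ⟨K, hK⟩ := (isCompact_Icc (a := -T) (b := T)).exists_bound_of_continuousOn hB.continuousOn
    exact ⟨max K 0, le_max_right _ _, fun t ht => (hK t (abs_le.mp ht)).trans (le_max_left _ _)⟩
  have hsumbd : ∀ T K : ℝ, Summable (fun n : ℕ => ‖y0‖ * (K ^ n * T ^ n / n.factorial)) := by
    intro T K
    apply Summable.mul_left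
    simpa [mul_pow] using Real.summable_pow_div_factorial (K * T)
  have hs : ∀ t, Summable (fun n => dys B y0 n t) := by
    intro t
    obtain ⟨K, hK0, hK⟩ := hbd |t|
    exact Summable.of_norm_bounded (hsumbd |t| K) (fun n => dys_bound B y0 |t| K hK hK0 n t le_rfl)
  have hs0 : ∀ n, dys B y0 (n+1) 0 = 0 := by intro n; simp [dys]
  refine ⟨fun t => ∑' n, dys B y0 n t, ?_, ?_, fun t => (hs t).hasSum⟩
  · show ∑' n, dys B y0 n 0 = y0
    rw [(hs 0).tsum_eq_zero_add]; simp [hs0]; simp [dys]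
  · intro t
    obtain ⟨K, hK0, hK⟩ := hbd (|t| + 1)
    have h1 : HasDerivAt (fun z => ∑' n, dys B y0 (n+1) z) (∑' n, B t (dys B y0 n t)) t := by
      refine hasDerivAt_tsum_of_isPreconnected (u := fun n => K * (‖y0‖ * (K ^ n * (|t|+1) ^ n / n.factorial)))
        (t := Ioo (-(|t|+1)) (|t|+1)) (y₀ := 0) (g' := fun n y => B y (dys B y0 n y))
        ((hsumbd (|t|+1) K).mul_left K) isOpen_Ioo isPreconnected_Ioo ?_ ?_ ?_ ?_ ?_
      · intro n y _; exact dys_deriv B hB y0 n y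
      · intro n y hy
        have hy' : |y| ≤ |t| + 1 := abs_le.mpr ⟨hy.1.le, hy.2.le⟩
        refine ((B y).le_opNorm _).trans ?_
        gcongr
        · exact hK y hy'
        · refine (dys_bound B y0 _ K hK hK0 n y hy').trans ?_
          gcongr
      · constructor <;> linarith [abs_nonneg t]
      · simp only [hs0]; exact summable_zero
      · constructor <;> linarith [abs_nonneg t, neg_abs_le t, le_abs_self t]
    have h2 : (fun z => ∑' n, dys B y0 n z) = fun z => y0 + ∑' n, dys B y0 (n+1) z := by
      funext z; rw [(hs z).tsum_eq_zero_add]; simp [dys]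
    rw [h2]
    have h3 := h1.const_add y0
    convert h3 using 1
    have h4 := (hs t).tsum_eq_zero_add
    have : y0 + ∑' n, dys B y0 (n+1) t = ∑' n, dys B y0 n t := by rw [h4]; simp [dys]
    show B t (y0 + ∑' n, dys B y0 (n+1) t) = _
    rw [this, (B t).map_tsum (hs t)]
end ODE
section Series

def Ser {E : Type*} [NormedAddCommGroup E] [NormedSpace ℝ E] (φ : ℝ → ℝ → ℝ → E) (C : ℝ) : Prop :=
  ∃ (ι : Type) (_ : Countable ι) (c : ι → E) (k i j : ι → ℕ),
    Summable (fun ν => ‖c ν‖ * 2 ^ (k ν)) ∧ (∑' ν, ‖c ν‖ * 2 ^ (k ν)) ≤ C ∧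
    ∀ a q α : ℝ, |a| ≤ 1 → |q| ≤ 1 → |α| ≤ 1 →
      HasSum (fun ν => (α ^ (k ν) * a ^ (i ν) * q ^ (j ν)) • c ν) (φ a q α)

variable {E : Type*} [NormedAddCommGroup E] [NormedSpace ℝ E]
variable {F : Type*} [NormedAddCommGroup F] [NormedSpace ℝ F]

lemma Ser.const (y : E) : Ser (fun _ _ _ => y) ‖y‖ := by
  refine ⟨Unit, inferInstance, fun _ => y, fun _ => 0, fun _ => 0, fun _ => 0, ?_, ?_, ?_⟩
  · exact (hasSum_fintype _).summable
  · simp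
  · intro a q α _ _ _
    simpa using hasSum_fintype (fun _ : Unit => y)

lemma mon_le {a q α : ℝ} (ha : |a| ≤ 1) (hq : |q| ≤ 1) (hα : |α| ≤ 1) (k i j : ℕ) :
    |α ^ k * a ^ i * q ^ j| ≤ 1 := by
  rw [abs_mul, abs_mul, abs_pow, abs_pow, abs_pow]
  have h1 := pow_le_one₀ (abs_nonneg α) hα (n := k)
  have h2 := pow_le_one₀ (abs_nonneg a) ha (n := i)
  have h3 := pow_le_one₀ (abs_nonneg q) hq (n := j)
  have : |α| ^ k * |a| ^ i ≤ 1 := mul_le_one₀ h1 (by positivity) h2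
  exact mul_le_one₀ this (by positivity) h3

lemma Ser.clm {φ : ℝ → ℝ → ℝ → E} {C : ℝ} (h : Ser φ C) (T : E →L[ℝ] F) :
    Ser (fun a q α => T (φ a q α)) (‖T‖ * C) := by
  obtain ⟨ι, hι, c, k, i, j, hs, hC, hsum⟩ := h
  have hb : ∀ ν, ‖T (c ν)‖ * 2 ^ (k ν) ≤ ‖T‖ * (‖c ν‖ * 2 ^ (k ν)) := by
    intro ν
    have := T.le_opNorm (c ν)
    calc ‖T (c ν)‖ * 2 ^ (k ν) ≤ (‖T‖ * ‖c ν‖) * 2 ^ (k ν) := by gcongr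
      _ = _ := by ring
  have hs' : Summable (fun ν => ‖T (c ν)‖ * 2 ^ (k ν)) :=
    Summable.of_nonneg_of_le (fun ν => by positivity) hb (hs.mul_left _)
  refine ⟨ι, hι, fun ν => T (c ν), k, i, j, hs', ?_, ?_⟩
  · calc _ ≤ ∑' ν, ‖T‖ * (‖c ν‖ * 2 ^ (k ν)) := hs'.tsum_le_tsum hb (hs.mul_left _)
      _ = ‖T‖ * ∑' ν, (‖c ν‖ * 2 ^ (k ν)) := tsum_mul_left
      _ ≤ _ := by gcongr
  · intro a q α ha hq hα
    have := T.hasSum (hsum a q α ha hq hα)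
    simpa using this

lemma Ser.step [CompleteSpace E] {B : ℝ → ℝ → ℝ → E →L[ℝ] E} {φ : ℝ → ℝ → ℝ → E} {C D : ℝ}
    (hB : Ser B C) (hφ : Ser φ D) :
    Ser (fun a q α => ∫ s in (0:ℝ)..α, B a q s (φ a q s)) (2 * C * D) := by
  obtain ⟨ι, hι, c, k, i, j, hs, hC, hsum⟩ := hB
  obtain ⟨ι', hι', c', k', i', j', hs', hC', hsum'⟩ := hφ
  have hprod : Summable (fun x : ι × ι' => (‖c x.1‖ * 2 ^ (k x.1)) * (‖c' x.2‖ * 2 ^ (k' x.2))) :=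
    hs.mul_of_nonneg hs' (fun _ => by positivity) (fun _ => by positivity)
  have hprodsum : ∑' x : ι × ι', (‖c x.1‖ * 2 ^ (k x.1)) * (‖c' x.2‖ * 2 ^ (k' x.2)) ≤ C * D := by
    rw [← hs.tsum_mul_tsum hs' hprod]
    have h0 : 0 ≤ ∑' ν, ‖c' ν‖ * 2 ^ (k' ν) := tsum_nonneg fun _ => by positivity
    have h1 : 0 ≤ ∑' ν, ‖c ν‖ * 2 ^ (k ν) := tsum_nonneg fun _ => by positivity
    exact mul_le_mul hC hC' h0 (h1.trans hC)
  set cc : ι × ι' → E := fun x => ((k x.1 + k' x.2 + 1 : ℝ)⁻¹) • (c x.1 (c' x.2)) with hcc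
  have hb : ∀ x : ι × ι', ‖cc x‖ * 2 ^ (k x.1 + k' x.2 + 1) ≤
      2 * ((‖c x.1‖ * 2 ^ (k x.1)) * (‖c' x.2‖ * 2 ^ (k' x.2))) := by
    intro x
    have h1 : ‖cc x‖ ≤ ‖c x.1‖ * ‖c' x.2‖ := by
      rw [hcc]; simp only [norm_smul]
      have h2 : ‖((k x.1 + k' x.2 + 1 : ℝ)⁻¹)‖ ≤ 1 := by
        rw [Real.norm_of_nonneg (by positivity)]
        exact inv_le_one_of_one_le₀ (by norm_cast; omega)
      calc _ ≤ 1 * (‖c x.1‖ * ‖c' x.2‖) := by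
            gcongr
            exact (c x.1).le_opNorm _
        _ = _ := one_mul _
    calc _ ≤ (‖c x.1‖ * ‖c' x.2‖) * 2 ^ (k x.1 + k' x.2 + 1) := by gcongr
      _ = _ := by ring
  have hS : Summable (fun x : ι × ι' => ‖cc x‖ * 2 ^ (k x.1 + k' x.2 + 1)) :=
    Summable.of_nonneg_of_le (fun ν => by positivity) hb (hprod.mul_left _)
  refine ⟨ι × ι', inferInstance, cc, fun x => k x.1 + k' x.2 + 1, fun x => i x.1 + i' x.2,
    fun x => j x.1 + j' x.2, hS, ?_, ?_⟩
  · calc _ ≤ _ := hS.tsum_le_tsum hb (hprod.mul_left _)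
      _ = 2 * _ := tsum_mul_left
      _ ≤ 2 * (C * D) := by gcongr
      _ = _ := by ring
  · intro a q α ha hq hα
    have hsmall : ∀ s ∈ uIoc 0 α, |s| ≤ 1 := by
      intro s hs
      have h := uIoc_subset_uIcc hs
      have := abs_sub_left_of_mem_uIcc h
      simp at this
      exact this.trans hα
    have key := intervalIntegral.hasSum_integral_of_dominated_convergence (μ := volume) (a := 0) (b := α)
      (F := fun (x : ι × ι') s => (s ^ (k x.1 + k' x.2) * a ^ (i x.1 + i' x.2) * q ^ (j x.1 + j' x.2)) •
        (c x.1 (c' x.2))) (f := fun s => B a q s (φ a q s))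
      (fun x _ => (‖c x.1‖ * 2 ^ (k x.1)) * (‖c' x.2‖ * 2 ^ (k' x.2)))
      (fun x => by
        apply Continuous.aestronglyMeasurable
        fun_prop)
      (fun x => Filter.Eventually.of_forall fun s hs => by
        rw [norm_smul, Real.norm_eq_abs]
        have h1 := mon_le ha hq (hsmall s hs) (k x.1 + k' x.2) (i x.1 + i' x.2) (j x.1 + j' x.2)
        have h2 : ‖c x.1‖ ≤ ‖c x.1‖ * 2 ^ (k x.1) := le_mul_of_one_le_right (norm_nonneg _) (one_le_pow₀ (by norm_num))
        have h3 : ‖c' x.2‖ ≤ ‖c' x.2‖ * 2 ^ (k' x.2) := le_mul_of_one_le_right (norm_nonneg _) (one_le_pow₀ (by norm_num))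
        calc _ ≤ 1 * (‖c x.1‖ * ‖c' x.2‖) := by
              gcongr
              exact (c x.1).le_opNorm _
          _ ≤ _ := by rw [one_mul]; gcongr)
      (Filter.Eventually.of_forall fun s _ => hprod)
      (by simp)
      (Filter.Eventually.of_forall fun s hsu => by
        have h1 := hsum a q s ha hq (hsmall s hsu)
        have h2 := hsum' a q s ha hq (hsmall s hsu)
        have hn1 : Summable fun ν => ‖(s ^ (k ν) * a ^ (i ν) * q ^ (j ν)) • c ν‖ :=
          Summable.of_nonneg_of_le (fun _ => norm_nonneg _) (fun ν => by
            rw [norm_smul, Real.norm_eq_abs]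
            have h2 : ‖c ν‖ ≤ ‖c ν‖ * 2 ^ (k ν) := le_mul_of_one_le_right (norm_nonneg _) (one_le_pow₀ (by norm_num))
            calc _ ≤ 1 * ‖c ν‖ := by gcongr; exact mon_le ha hq (hsmall s hsu) _ _ _
              _ ≤ _ := by rw [one_mul]; exact h2) hs
        have hn2 : Summable fun ν => ‖(s ^ (k' ν) * a ^ (i' ν) * q ^ (j' ν)) • c' ν‖ :=
          Summable.of_nonneg_of_le (fun _ => norm_nonneg _) (fun ν => by
            rw [norm_smul, Real.norm_eq_abs]
            have h2 : ‖c' ν‖ ≤ ‖c' ν‖ * 2 ^ (k' ν) := le_mul_of_one_le_right (norm_nonneg _) (one_le_pow₀ (by norm_num))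
            calc _ ≤ 1 * ‖c' ν‖ := by gcongr; exact mon_le ha hq (hsmall s hsu) _ _ _
              _ ≤ _ := by rw [one_mul]; exact h2) hs'
        have hsm : Summable (fun x : ι × ι' => ((s ^ (k x.1) * a ^ (i x.1) * q ^ (j x.1)) • c x.1)
            ((s ^ (k' x.2) * a ^ (i' x.2) * q ^ (j' x.2)) • c' x.2)) := by
          refine Summable.of_norm_bounded (hn1.mul_of_nonneg hn2 (fun _ => norm_nonneg _) (fun _ => norm_nonneg _)) ?_
          intro x
          exact ContinuousLinearMap.le_opNorm _ _
        have h3 : HasSum (fun x : ι × ι' => ((s ^ (k x.1) * a ^ (i x.1) * q ^ (j x.1)) • c x.1)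
            ((s ^ (k' x.2) * a ^ (i' x.2) * q ^ (j' x.2)) • c' x.2)) (B a q s (φ a q s)) := by
          have h4 := hsm.hasSum
          have h5 := h4.prod_fiberwise (fun b => (((s ^ (k b) * a ^ (i b) * q ^ (j b)) • c b)).hasSum h2)
          have h6 := h1.mapL (ContinuousLinearMap.apply ℝ E (φ a q s))
          have h7 := h5.unique h6
          rw [h7] at h4
          exact h4
        convert h3 using 2 with x
        simp only [_root_.smul_apply, map_smul, smul_smul]
        congr 1
        ring)
    convert key using 2 with x
    rw [intervalIntegral.integral_smul_const]
    simp only [hcc, smul_smul]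
    congr 1
    rw [intervalIntegral.integral_mul_const, intervalIntegral.integral_mul_const, integral_pow]
    push_cast
    have : (k x.1 + k' x.2 + 1 : ℝ) ≠ 0 := by positivity
    field_simp
    simp
    ring

lemma Ser.tsum [CompleteSpace E] {φ : ℕ → ℝ → ℝ → ℝ → E} {ψ : ℝ → ℝ → ℝ → E} {C : ℕ → ℝ} (h : ∀ n, Ser (φ n) (C n))
    (hC : Summable C)
    (hψ : ∀ a q α : ℝ, |a| ≤ 1 → |q| ≤ 1 → |α| ≤ 1 → HasSum (fun n => φ n a q α) (ψ a q α)) :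
    Ser ψ (∑' n, C n) := by
  choose ι hι c k i j hs hle hsum using h
  have hSn : Summable (fun n => ∑' ν, ‖c n ν‖ * 2 ^ (k n ν)) :=
    Summable.of_nonneg_of_le (fun n => tsum_nonneg fun _ => by positivity) hle hC
  have hS : Summable (fun x : (n : ℕ) × ι n => ‖c x.1 x.2‖ * 2 ^ (k x.1 x.2)) := by
    rw [summable_sigma_of_nonneg (fun x => by positivity)]
    exact ⟨hs, hSn⟩
  refine ⟨(n : ℕ) × ι n, inferInstance, fun x => c x.1 x.2, fun x => k x.1 x.2, fun x => i x.1 x.2,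
    fun x => j x.1 x.2, hS, ?_, ?_⟩
  · rw [hS.tsum_sigma' hs]
    exact hSn.tsum_le_tsum hle hC
  · intro a q α ha hq hα
    have hsm : Summable (fun x : (n : ℕ) × ι n =>
        (α ^ (k x.1 x.2) * a ^ (i x.1 x.2) * q ^ (j x.1 x.2)) • c x.1 x.2) := by
      refine Summable.of_norm_bounded hS fun x => ?_
      rw [norm_smul, Real.norm_eq_abs]
      have h2 : ‖c x.1 x.2‖ ≤ ‖c x.1 x.2‖ * 2 ^ (k x.1 x.2) := le_mul_of_one_le_right (norm_nonneg _) (one_le_pow₀ (by norm_num))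
      calc _ ≤ 1 * ‖c x.1 x.2‖ := by gcongr; exact mon_le ha hq hα _ _ _
        _ ≤ _ := by rw [one_mul]; exact h2
    have h4 := hsm.hasSum
    have h5 := h4.sigma (fun n => hsum n a q α ha hq hα)
    rw [h5.unique (hψ a q α ha hq hα)] at h4
    exact h4

lemma Ser.mono {φ : ℝ → ℝ → ℝ → E} {C D : ℝ} (h : Ser φ C) (hCD : C ≤ D) : Ser φ D := by
  obtain ⟨ι, hι, c, k, i, j, hs, hC, hsum⟩ := h
  exact ⟨ι, hι, c, k, i, j, hs, hC.trans hCD, hsum⟩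

lemma dys_ser [CompleteSpace E] {B : ℝ → ℝ → ℝ → E →L[ℝ] E} {C : ℝ} (hB : Ser B C) (y0 : E) (n : ℕ) :
    Ser (fun a q α => dys (B a q) y0 n α) ((2 * C) ^ n * ‖y0‖) := by
  induction n with
  | zero => simpa [dys] using Ser.const y0
  | succ n ih =>
    have := hB.step ih
    refine Ser.mono this (le_of_eq ?_)
    ring

/-- The solution minus its initial value has a small series. -/
lemma ode_ser [CompleteSpace E] {B : ℝ → ℝ → ℝ → E →L[ℝ] E} {C : ℝ} (hC0 : 0 ≤ C) (hC : C ≤ 1 / 4)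
    (hB : Ser B C) (y0 : E) (y : ℝ → ℝ → ℝ → E)
    (hy : ∀ a q α, |a| ≤ 1 → |q| ≤ 1 → |α| ≤ 1 → HasSum (fun n => dys (B a q) y0 n α) (y a q α)) :
    Ser (fun a q α => y a q α - y0) (4 * C * ‖y0‖) := by
  have hlt : 2 * C < 1 := by linarith
  have h0 : 0 ≤ 2 * C := by linarith
  have hg := summable_geometric_of_lt_one h0 hlt
  have h1 := Ser.tsum (φ := fun n a q α => dys (B a q) y0 (n+1) α)
    (ψ := fun a q α => y a q α - y0) (C := fun n => (2 * C) ^ (n+1) * ‖y0‖)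
    (fun n => dys_ser hB y0 (n+1))
    (((summable_nat_add_iff 1).mpr hg).mul_right _)
    (fun a q α ha hq hα => by
      have := (hasSum_nat_add_iff' 1).mpr (hy a q α ha hq hα)
      simpa [dys] using this)
  refine h1.mono ?_
  rw [tsum_mul_right]
  have : ∑' n : ℕ, (2 * C) ^ (n + 1) = 2 * C * (1 - 2 * C)⁻¹ := by
    simp_rw [pow_succ']
    rw [tsum_mul_left, tsum_geometric_of_lt_one h0 hlt]
  rw [this]
  have h3 : (1 - 2 * C)⁻¹ ≤ 2 := by
    rw [inv_le_comm₀ (by linarith) (by norm_num)]; linarith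
  have : 2 * C * (1 - 2 * C)⁻¹ ≤ 4 * C := by nlinarith
  gcongr

end Series
section Analytic
variable {X : Type*} [NormedAddCommGroup X] [NormedSpace ℝ X]
variable {F : Type*} [NormedAddCommGroup F] [NormedSpace ℝ F] [CompleteSpace F]

lemma Ser.ofAnalytic {G : X → F} {p : FormalMultilinearSeries ℝ X F} {R : ENNReal}
    (hG : HasFPowerSeriesOnBall G p 0 R) (ρ : NNReal) (hρ : ((8 * ρ : NNReal) : ENNReal) < R)
    (u : Fin 4 → X) (hu : ∀ d, ‖u d‖ ≤ ρ) :
    Ser (fun a q α => G (u 0 + a • u 1 + q • u 2 + α • u 3)) (∑' n, ‖p n‖ * ((8 * ρ : NNReal) : ℝ) ^ n) := by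
  have hsum8 : Summable fun n => ‖p n‖ * ((8 * ρ : NNReal) : ℝ) ^ n :=
    p.summable_norm_mul_pow (hρ.trans_le hG.r_le)
  let c : ((n : ℕ) × (Fin n → Fin 4)) → F := fun x => p x.1 (fun m => u (x.2 m))
  let cnt : Fin 4 → ((n : ℕ) × (Fin n → Fin 4)) → ℕ := fun d x => ∑ m, if x.2 m = d then 1 else 0
  have hcnt : ∀ d x, cnt d x ≤ x.1 := by
    intro d x
    calc cnt d x ≤ ∑ m : Fin x.1, 1 := Finset.sum_le_sum fun m _ => by split_ifs <;> simp
      _ = x.1 := by simp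
  have hc : ∀ x, ‖c x‖ ≤ ‖p x.1‖ * (ρ : ℝ) ^ x.1 := by
    intro x
    refine ((p x.1).le_opNorm _).trans ?_
    gcongr
    calc ∏ m, ‖u (x.2 m)‖ ≤ ∏ m : Fin x.1, (ρ : ℝ) :=
          Finset.prod_le_prod (fun _ _ => norm_nonneg _) (fun m _ => hu _)
      _ = _ := by simp
  have hb : ∀ x, ‖c x‖ * 2 ^ (cnt 3 x) ≤ ‖p x.1‖ * (ρ : ℝ) ^ x.1 * 2 ^ x.1 := by
    intro x
    have h2 : (2:ℝ) ^ (cnt 3 x) ≤ 2 ^ x.1 := pow_le_pow_right₀ (by norm_num) (hcnt 3 x)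
    have := hc x
    gcongr
  have hfin : ∀ n, (∑' w : Fin n → Fin 4, ‖c ⟨n, w⟩‖ * 2 ^ (cnt 3 ⟨n, w⟩)) ≤
      ‖p n‖ * ((8 * ρ : NNReal) : ℝ) ^ n := by
    intro n
    rw [tsum_fintype]
    calc _ ≤ ∑ w : Fin n → Fin 4, ‖p n‖ * (ρ : ℝ) ^ n * 2 ^ n := Finset.sum_le_sum fun w _ => hb ⟨n, w⟩
      _ = _ := by
        simp only [Finset.sum_const, Finset.card_univ, Fintype.card_fun, Fintype.card_fin, nsmul_eq_mul]
        push_cast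
        rw [mul_pow, show (8:ℝ) = 4 * 2 by norm_num, mul_pow]
        ring
  have hS : Summable (fun x => ‖c x‖ * 2 ^ (cnt 3 x)) := by
    rw [summable_sigma_of_nonneg (fun x => by positivity)]
    exact ⟨fun n => (hasSum_fintype _).summable,
      Summable.of_nonneg_of_le (fun n => tsum_nonneg fun _ => by positivity) hfin hsum8⟩
  refine ⟨(n : ℕ) × (Fin n → Fin 4), inferInstance, c, cnt 3, cnt 1, cnt 2, hS, ?_, ?_⟩
  · rw [hS.tsum_sigma' (fun n => (hasSum_fintype _).summable)]
    exact Summable.tsum_le_tsum hfin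
      (Summable.of_nonneg_of_le (fun n => tsum_nonneg fun _ => by positivity) hfin hsum8) hsum8
  · intro a q α ha hq hα
    have hsm : Summable (fun x => (α ^ (cnt 3 x) * a ^ (cnt 1 x) * q ^ (cnt 2 x)) • c x) := by
      refine Summable.of_norm_bounded hS fun x => ?_
      rw [norm_smul, Real.norm_eq_abs]
      have h2 : ‖c x‖ ≤ ‖c x‖ * 2 ^ (cnt 3 x) := le_mul_of_one_le_right (norm_nonneg _) (one_le_pow₀ (by norm_num))
      calc _ ≤ 1 * ‖c x‖ := by gcongr; exact mon_le ha hq hα _ _ _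
        _ ≤ _ := by rw [one_mul]; exact h2
    set Y := u 0 + a • u 1 + q • u 2 + α • u 3 with hY
    have hYn : Y ∈ Metric.eball (0 : X) R := by
      have h1 : ‖Y‖ ≤ 4 * ρ := by
        have e1 : ‖a • u 1‖ ≤ 1 * ρ := by rw [norm_smul]; gcongr; exacts [ha, hu 1]
        have e2 : ‖q • u 2‖ ≤ 1 * ρ := by rw [norm_smul]; gcongr; exacts [hq, hu 2]
        have e3 : ‖α • u 3‖ ≤ 1 * ρ := by rw [norm_smul]; gcongr; exacts [hα, hu 3]
        have := hu 0
        have t1 := norm_add_le (u 0 + a • u 1 + q • u 2) (α • u 3)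
        have t2 := norm_add_le (u 0 + a • u 1) (q • u 2)
        have t3 := norm_add_le (u 0) (a • u 1)
        linarith
      rw [Metric.mem_eball, edist_zero_right]
      refine lt_of_le_of_lt ?_ hρ
      rw [← ofReal_norm, ENNReal.ofReal_le_iff_le_toReal ENNReal.coe_ne_top]
      simp
      have : (0:ℝ) ≤ ρ := ρ.2
      linarith
    have hmain := hG.hasSum hYn
    rw [zero_add] at hmain
    have h4 := hsm.hasSum
    have hfib : ∀ n, HasSum (fun w : Fin n → Fin 4 =>
        (α ^ (cnt 3 ⟨n, w⟩) * a ^ (cnt 1 ⟨n, w⟩) * q ^ (cnt 2 ⟨n, w⟩)) • c ⟨n, w⟩) (p n fun _ => Y) := by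
      intro n
      let g : Fin 4 → ℝ := ![1, a, q, α]
      have hY' : Y = ∑ d, g d • u d := by
        simp [Fin.sum_univ_four, g, hY]
      have : (p n fun _ => Y) = ∑ w : Fin n → Fin 4,
          (α ^ (cnt 3 ⟨n, w⟩) * a ^ (cnt 1 ⟨n, w⟩) * q ^ (cnt 2 ⟨n, w⟩)) • c ⟨n, w⟩ := by
        rw [hY']
        have := (p n).toMultilinearMap.map_sum (fun (_ : Fin n) d => g d • u d)
        simp only [ContinuousMultilinearMap.coe_coe] at this
        rw [this]
        refine Finset.sum_congr rfl fun w _ => ?_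
        rw [(p n).map_smul_univ (fun m => g (w m)) (fun m => u (w m))]
        congr 1
        simp only [cnt]
        rw [← Finset.prod_pow_eq_pow_sum, ← Finset.prod_pow_eq_pow_sum, ← Finset.prod_pow_eq_pow_sum,
          ← Finset.prod_mul_distrib, ← Finset.prod_mul_distrib]
        refine Finset.prod_congr rfl fun m _ => ?_
        have hd : ∀ d : Fin 4, g d = ((α ^ if d = 3 then 1 else 0) * a ^ if d = 1 then 1 else 0) *
            q ^ if d = 2 then 1 else 0 := by
          intro d
          fin_cases d <;> simp [g]
        exact hd (w m)
      rw [this]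
      exact hasSum_fintype _
    have h5 := h4.sigma hfib
    rw [h5.unique hmain] at h4
    exact h4

end Analytic
section IBP
variable {V : Type*} [NormedAddCommGroup V] [NormedSpace ℝ V] [CompleteSpace V]

lemma gcont (F : ℝ → V) (hF : Continuous F) (j : ℕ) :
    Continuous (fun t => ∫ q in (0:ℝ)..(1/8), q ^ j • F (q + t)) := by
  apply intervalIntegral.continuous_parametric_intervalIntegral_of_continuous'
  fun_prop

lemma gderiv (F : ℝ → V) (hF : Continuous F) (h0 : ∀ σ, 1/16 < σ → F σ = 0) (j : ℕ) (t : ℝ) (ht : 0 ≤ t) :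
    HasDerivAt (fun t => ∫ q in (0:ℝ)..(1/8), q ^ (j+1) • F (q + t))
      (-((j+1 : ℝ) • ∫ q in (0:ℝ)..(1/8), q ^ j • F (q + t))) t := by
  set G : ℝ → V := fun t => - ∫ σ in (1/16:ℝ)..t, F σ with hG
  have hGd : ∀ t, HasDerivAt G (- F t) t := fun t =>
    (intervalIntegral.integral_hasDerivAt_right (hF.intervalIntegrable _ _)
      hF.stronglyMeasurable.stronglyMeasurableAtFilter hF.continuousAt).neg
  have hGc : Continuous G := continuous_iff_continuousAt.mpr fun t => (hGd t).continuousAt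
  have hG0 : ∀ t, 1/16 ≤ t → G t = 0 := by
    intro t ht
    simp only [hG, neg_eq_zero]
    rw [intervalIntegral.integral_of_le ht]
    apply setIntegral_eq_zero_of_forall_eq_zero
    intro σ hσ
    exact h0 σ hσ.1
  have hA : ∀ t, -1/16 < t → ∫ q in (0:ℝ)..(1/8), q ^ (j+1) • F (q + t) =
      (j+1 : ℝ) • ∫ q in (0:ℝ)..(1/8), q ^ j • G (q + t) := by
    intro t ht
    have h1 : ∀ q ∈ uIcc (0:ℝ) (1/8), HasDerivAt (fun q : ℝ => q ^ (j+1) • G (q + t))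
        (((j+1 : ℝ) * q ^ j) • G (q + t) - q ^ (j+1) • F (q + t)) q := by
      intro q _
      have e1 : HasDerivAt (fun q : ℝ => q ^ (j+1)) ((j+1 : ℝ) * q ^ j) q := by
        simpa using hasDerivAt_pow (j+1) q
      have e2 : HasDerivAt (fun q : ℝ => G (q + t)) (- F (q + t)) q := (hGd (q+t)).comp_add_const q t
      refine HasDerivAt.congr_deriv (e1.smul e2) ?_
      rw [smul_neg]; abel
    have h2 := intervalIntegral.integral_eq_sub_of_hasDerivAt h1
      (by apply Continuous.intervalIntegrable; fun_prop)
    rw [intervalIntegral.integral_sub (by apply Continuous.intervalIntegrable; fun_prop)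
      (by apply Continuous.intervalIntegrable; fun_prop)] at h2
    rw [hG0 (1/8 + t) (by linarith)] at h2
    simp only [smul_zero, ne_eq, Nat.add_eq_zero_iff, one_ne_zero, and_false, not_false_eq_true, zero_pow,
      zero_smul, sub_zero] at h2
    rw [sub_eq_zero] at h2
    rw [← h2, ← intervalIntegral.integral_smul]
    simp only [smul_smul]
  have hB : HasDerivAt (fun t => ∫ q in (0:ℝ)..(1/8), q ^ j • G (q + t))
      (∫ q in (0:ℝ)..(1/8), q ^ j • (- F (q + t))) t := by
    obtain ⟨K, hK⟩ := (isCompact_Icc (a := t - 1) (b := t + 2)).exists_bound_of_continuousOn hF.continuousOn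
    refine (intervalIntegral.hasDerivAt_integral_of_dominated_loc_of_deriv_le (μ := volume) (𝕜 := ℝ)
      (F := fun t q => q ^ j • G (q + t)) (F' := fun t q => q ^ j • (- F (q + t))) (bound := fun _ => K)
      (Metric.ball_mem_nhds t one_pos) ?_ ?_ ?_ ?_ ?_ ?_).2
    · refine Filter.Eventually.of_forall fun x => ?_
      apply Continuous.aestronglyMeasurable; fun_prop
    · apply Continuous.intervalIntegrable; fun_prop
    · apply Continuous.aestronglyMeasurable; fun_prop
    · refine Filter.Eventually.of_forall fun q hq x hx => ?_
      rw [uIoc_of_le (by norm_num)] at hq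
      rw [Metric.mem_ball, Real.dist_eq, abs_lt] at hx
      have h1 := hK (q + x) ⟨by linarith [hq.1], by linarith [hq.2]⟩
      rw [norm_smul, norm_neg, norm_pow, Real.norm_of_nonneg hq.1.le]
      have h2 : q ^ j ≤ 1 := pow_le_one₀ hq.1.le (by linarith [hq.2])
      calc _ ≤ 1 * ‖F (q + x)‖ := by gcongr
        _ ≤ K := by rw [one_mul]; exact h1
    · simp
    · refine Filter.Eventually.of_forall fun q hq x hx => ?_
      exact ((hGd (q+x)).comp_const_add q x).const_smul (q ^ j)
  have hC := hB.const_smul (j+1 : ℝ)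
  have hD : (fun t => ∫ q in (0:ℝ)..(1/8), q ^ (j+1) • F (q + t)) =ᶠ[nhds t]
      (fun t => (j+1 : ℝ) • ∫ q in (0:ℝ)..(1/8), q ^ j • G (q + t)) := by
    filter_upwards [lt_mem_nhds (show -1/16 < t by linarith)] with t' ht'
    exact hA t' ht'
  have hE := HasDerivAt.congr_of_eventuallyEq hC hD
  convert hE using 1
  simp only [smul_neg, intervalIntegral.integral_neg]

lemma ibp (F : ℝ → V) (hF : Continuous F) (α : ℝ) (h0 : ∀ σ, 1/16 < σ + α ^ 2 → F σ = 0) (i j : ℕ) :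
    ∫ a in (-1/2:ℝ)..(1/2), ∫ q in (0:ℝ)..(1/8), ((a - α) * a ^ i * q ^ j) • F (q + (a - α) ^ 2) =
    (i / (2 * (j + 1)) : ℝ) • ∫ a in (-1/2:ℝ)..(1/2), ∫ q in (0:ℝ)..(1/8),
      (a ^ (i-1) * q ^ (j+1)) • F (q + (a - α) ^ 2) := by
  set g : ℕ → ℝ → V := fun j t => ∫ q in (0:ℝ)..(1/8), q ^ j • F (q + t) with hg
  have hgc : ∀ j, Continuous (g j) := gcont F hF
  have h0' : ∀ σ, 1/16 < σ → F σ = 0 := fun σ hσ => h0 σ (by nlinarith [sq_nonneg α])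
  have hgz : ∀ j t, 1/16 < t + α ^ 2 → g j t = 0 := by
    intro j t ht
    simp only [hg]
    rw [intervalIntegral.integral_of_le (by norm_num)]
    apply setIntegral_eq_zero_of_forall_eq_zero
    intro q hq
    rw [h0 (q + t) (by linarith [hq.1]), smul_zero]
  have hd : ∀ a ∈ uIcc (-1/2:ℝ) (1/2), HasDerivAt (fun a : ℝ => a ^ i • g (j+1) ((a - α) ^ 2))
      ((i * a ^ (i-1)) • g (j+1) ((a - α) ^ 2) - (2 * (j+1) : ℝ) • (((a - α) * a ^ i) • g j ((a - α) ^ 2))) a := by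
    intro a _
    have e1 := hasDerivAt_pow i a
    have e2 : HasDerivAt (fun a : ℝ => (a - α) ^ 2) (2 * (a - α)) a := by
      refine HasDerivAt.congr_deriv (((hasDerivAt_id a).sub_const α).pow 2) ?_
      simp
    have e3 := (gderiv F hF h0' j ((a - α) ^ 2) (sq_nonneg _)).scomp a e2
    refine HasDerivAt.congr_deriv (e1.smul e3) ?_
    simp only [hg, Function.comp]
    module
  have hint := intervalIntegral.integral_eq_sub_of_hasDerivAt hd
    (by
      have := hgc (j+1)
      have := hgc j
      apply Continuous.intervalIntegrable; fun_prop)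
  have hgc1 := hgc (j+1)
  have hgc0 := hgc j
  rw [hgz (j+1) ((1/2 - α)^2) (by nlinarith [sq_nonneg (α - 1/4)]),
    hgz (j+1) ((-1/2 - α)^2) (by nlinarith [sq_nonneg (α + 1/4)]), smul_zero, smul_zero, sub_zero,
    intervalIntegral.integral_sub (by apply Continuous.intervalIntegrable; fun_prop)
      (by apply Continuous.intervalIntegrable; fun_prop), intervalIntegral.integral_smul, sub_eq_zero] at hint
  have hne : (2 * (j + 1) : ℝ) ≠ 0 := by positivity
  have hl : ∀ a : ℝ, ∫ q in (0:ℝ)..(1/8), ((a - α) * a ^ i * q ^ j) • F (q + (a - α) ^ 2) =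
      ((a - α) * a ^ i) • g j ((a - α)^2) := by
    intro a
    simp only [hg, ← intervalIntegral.integral_smul, smul_smul]
  have hr : ∀ a : ℝ, ∫ q in (0:ℝ)..(1/8), (a ^ (i-1) * q ^ (j+1)) • F (q + (a - α) ^ 2) =
      (a ^ (i-1)) • g (j+1) ((a - α)^2) := by
    intro a
    simp only [hg, ← intervalIntegral.integral_smul, smul_smul]
  simp only [hl, hr]
  rw [show (i / (2 * (j + 1)) : ℝ) = (2 * (j + 1) : ℝ)⁻¹ * i from div_eq_inv_mul _ _, mul_smul, ← intervalIntegral.integral_smul (i:ℝ)]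
  simp only [smul_smul]
  rw [hint, smul_smul, inv_mul_cancel₀ hne, one_smul]
end IBP
section Core
variable {V : Type*} [NormedAddCommGroup V] [NormedSpace ℝ V] [CompleteSpace V]

lemma moment_real (a b : ℝ) (hab : a < b) (h : ℝ → ℝ) (hh : Continuous h)
    (hm : ∀ k : ℕ, ∫ x in a..b, x ^ k * h x = 0) : ∀ x ∈ Icc a b, h x = 0 := by
  have hpoly : ∀ p : Polynomial ℝ, ∫ x in a..b, p.eval x * h x = 0 := by
    intro p
    induction p using Polynomial.induction_on' with
    | add p q hp hq =>
      have := intervalIntegral.integral_add (μ := volume) (a := a) (b := b) (f := fun x => p.eval x * h x)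
        (g := fun x => q.eval x * h x)
        ((p.continuous.mul hh).intervalIntegrable _ _) ((q.continuous.mul hh).intervalIntegrable _ _)
      simp only [Polynomial.eval_add, add_mul]
      rw [this, hp, hq, add_zero]
    | monomial n c =>
      simp only [Polynomial.eval_monomial, mul_assoc]
      rw [intervalIntegral.integral_const_mul, hm, mul_zero]
  obtain ⟨K, hK⟩ := (isCompact_Icc (a := a) (b := b)).exists_bound_of_continuousOn hh.continuousOn
  have hK0 : 0 ≤ K := (norm_nonneg _).trans (hK a ⟨le_rfl, hab.le⟩)
  have hle : ∀ ε > 0, ∫ x in a..b, h x * h x ≤ ε * (K * (b - a)) := by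
    intro ε hε
    obtain ⟨p, hp⟩ := exists_polynomial_near_of_continuousOn a b h hh.continuousOn ε hε
    have e1 : ∫ x in a..b, h x * h x = ∫ x in a..b, (h x - p.eval x) * h x := by
      have := intervalIntegral.integral_sub (μ := volume) (a := a) (b := b) (f := fun x => h x * h x)
        (g := fun x => p.eval x * h x)
        ((hh.mul hh).intervalIntegrable _ _) ((p.continuous.mul hh).intervalIntegrable _ _)
      rw [hpoly p, sub_zero] at this
      rw [← this]
      simp only [sub_mul]
    rw [e1]
    have e2 := intervalIntegral.norm_integral_le_of_norm_le_const (a := a) (b := b) (C := ε * K)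
      (f := fun x => (h x - p.eval x) * h x) (by
        intro x hx
        rw [uIoc_of_le hab.le] at hx
        have hx' : x ∈ Icc a b := ⟨hx.1.le, hx.2⟩
        rw [norm_mul]
        have := hp x hx'
        rw [abs_sub_comm] at this
        exact mul_le_mul this.le (hK x hx') (norm_nonneg _) hε.le)
    rw [abs_of_nonneg (by linarith)] at e2
    calc _ ≤ _ := le_abs_self _
      _ ≤ _ := e2
      _ = _ := by ring
  have hzero : ∫ x in a..b, h x * h x ≤ 0 := by
    by_contra hc
    push Not at hc
    have hba : 0 ≤ K * (b - a) := mul_nonneg hK0 (by linarith)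
    have h3 := hle ((∫ x in a..b, h x * h x) / (2 * (K * (b - a) + 1))) (by positivity)
    have : (∫ x in a..b, h x * h x) / (2 * (K * (b - a) + 1)) * (K * (b - a)) < ∫ x in a..b, h x * h x := by
      rw [div_mul_eq_mul_div, div_lt_iff₀ (by positivity)]
      nlinarith
    linarith
  intro x hx
  by_contra hne
  have := intervalIntegral.integral_pos (f := fun x => h x * h x) hab (hh.mul hh).continuousOn
    (fun x _ => mul_self_nonneg _) ⟨x, hx, mul_self_pos.mpr hne⟩
  linarith

lemma moment_vec (a b : ℝ) (hab : a < b) (h : ℝ → V) (hh : Continuous h)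
    (hm : ∀ k : ℕ, ∫ x in a..b, x ^ k • h x = 0) : ∀ x ∈ Icc a b, h x = 0 := by
  intro x hx
  refine SeparatingDual.eq_zero_of_forall_dual_eq_zero (R := ℝ) fun g => ?_
  refine moment_real a b hab (fun x => g (h x)) (by fun_prop) (fun k => ?_) x hx
  have := g.intervalIntegral_comp_comm (μ := volume) (a := a) (b := b) (f := fun x => x ^ k • h x)
    (by apply Continuous.intervalIntegrable; fun_prop)
  rw [hm k, map_zero] at this
  simpa using this

noncomputable def wt (i j : ℕ) : ℝ := ((i + j).choose i : ℝ)⁻¹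

lemma wt_pos (i j : ℕ) : 0 < wt i j := by
  unfold wt
  have : 0 < (i+j).choose i := Nat.choose_pos (by omega)
  positivity

lemma wt_mono (i j i' j' : ℕ) : wt (i + i') (j + j') ≤ wt i j := by
  unfold wt
  have h0 : 0 < (i+j).choose i := Nat.choose_pos (by omega)
  have h1 : (i + j).choose i ≤ (i + (j + j')).choose i := Nat.choose_le_choose _ (by omega)
  have h2 : (i + (j + j')).choose i ≤ (i + i' + (j + j')).choose (i + i') := by
    rw [Nat.choose_symm_add, Nat.choose_symm_add]
    exact Nat.choose_le_choose _ (by omega)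
  gcongr
  exact h1.trans h2

lemma wt_shift (i j : ℕ) : (i / (j + 1) : ℝ) * wt (i - 1) (j + 1) ≤ wt i j := by
  rcases i with _ | i
  · simp [(wt_pos 0 j).le]
  · simp only [Nat.add_sub_cancel]
    unfold wt
    have h := Nat.choose_succ_right_eq (i + 1 + j) i
    rw [show i + 1 + j - i = j + 1 by omega] at h
    rw [show i + (j + 1) = i + 1 + j by omega]
    have h1 : 0 < (i + 1 + j).choose i := Nat.choose_pos (by omega)
    have h2 : 0 < (i + 1 + j).choose (i + 1) := Nat.choose_pos (by omega)
    have h' : ((i + 1 + j).choose (i + 1) : ℝ) * (i + 1) = (i + 1 + j).choose i * (j + 1) := by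
      exact_mod_cast h
    have h1' : (0 : ℝ) < (i + 1 + j).choose i := by exact_mod_cast h1
    have h2' : (0 : ℝ) < (i + 1 + j).choose (i+1) := by exact_mod_cast h2
    apply le_of_eq
    push_cast
    field_simp
    linarith

lemma wt_lower (i j : ℕ) : (1/2 : ℝ) ^ i * (1/8) ^ j ≤ wt i j := by
  unfold wt
  have h0 : 0 < (i+j).choose i := Nat.choose_pos (by omega)
  have h1 : ((i+j).choose i : ℝ) ≤ 2 ^ (i + j) := by exact_mod_cast Nat.choose_le_two_pow _ _
  have h0' : (0 : ℝ) < (i+j).choose i := by exact_mod_cast h0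
  calc (1/2 : ℝ) ^ i * (1/8) ^ j ≤ (1/2) ^ i * (1/2) ^ j := by gcongr; norm_num
    _ = (2 ^ (i + j))⁻¹ := by rw [← pow_add]; simp
    _ ≤ _ := by gcongr

/-- The abstract decay argument on moments. -/
lemma moment_decay (L : ℕ → ℕ → ℕ → V) (M₀ : ℝ)
    (hM : ∀ i j, ‖L 0 i j‖ ≤ M₀ * wt i j)
    (hrec : ∀ k i j, L (k+1) i j = L k (i+1) j - (i / (2 * (j + 1)) : ℝ) • L k (i-1) (j+1))
    {ι : Type} (c : ι → V →L[ℝ] V) (kk ii jj : ι → ℕ) (hs : Summable (fun ν => ‖c ν‖ * 2 ^ (kk ν)))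
    (hC : (∑' ν, ‖c ν‖ * 2 ^ (kk ν)) ≤ 1/2)
    (hrel : ∀ i j, HasSum (fun ν => c ν (L (kk ν) (i + ii ν) (j + jj ν))) (- L 0 i j)) :
    ∀ k i j, L k i j = 0 := by
  have hgrow : ∀ M : ℝ, 0 ≤ M → (∀ i j, ‖L 0 i j‖ ≤ M * wt i j) →
      ∀ k i j, ‖L k i j‖ ≤ M * 2 ^ k * wt i j := by
    intro M hM0 h k
    induction k with
    | zero => simpa using h
    | succ k ih =>
      intro i j
      rw [hrec]
      have h1 := ih (i+1) j
      have h2 := ih (i-1) (j+1)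
      have h3 := wt_mono i j 1 0
      have h4 := wt_shift i j
      have hMk : 0 ≤ M * 2 ^ k := by positivity
      simp only [add_zero] at h3
      have h5 : ‖(i / (2 * (j + 1)) : ℝ) • L k (i-1) (j+1)‖ ≤ M * 2 ^ k * (1/2 * wt i j) := by
        rw [norm_smul, Real.norm_of_nonneg (by positivity)]
        calc _ ≤ (i / (2 * (j + 1)) : ℝ) * (M * 2 ^ k * wt (i-1) (j+1)) := by gcongr
          _ = M * 2 ^ k * (1/2 * ((i / (j + 1) : ℝ) * wt (i - 1) (j + 1))) := by field_simp
          _ ≤ _ := by gcongr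
      calc _ ≤ _ := norm_sub_le _ _
        _ ≤ M * 2 ^ k * wt i j + M * 2 ^ k * (1/2 * wt i j) := by
          gcongr
          exact h1.trans (by gcongr)
        _ ≤ M * 2 ^ (k+1) * wt i j := by
          have := wt_pos i j
          have : 0 ≤ M * 2 ^ k * wt i j := by positivity
          rw [pow_succ]; linarith
  have hhalf : ∀ M : ℝ, 0 ≤ M → (∀ i j, ‖L 0 i j‖ ≤ M * wt i j) → (∀ i j, ‖L 0 i j‖ ≤ (M / 2) * wt i j) := by
    intro M hM0 h i j
    have hg := hgrow M hM0 h
    have hw := wt_pos i j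
    have hb : ∀ ν, ‖c ν (L (kk ν) (i + ii ν) (j + jj ν))‖ ≤ (M * wt i j) * (‖c ν‖ * 2 ^ (kk ν)) := by
      intro ν
      calc _ ≤ ‖c ν‖ * ‖L (kk ν) (i + ii ν) (j + jj ν)‖ := (c ν).le_opNorm _
        _ ≤ ‖c ν‖ * (M * 2 ^ (kk ν) * wt i j) := by
          gcongr
          exact (hg _ _ _).trans (by gcongr; exact wt_mono _ _ _ _)
        _ = _ := by ring
    have h1 := tsum_of_norm_bounded (hs.mul_left (M * wt i j)).hasSum hb
    rw [(hrel i j).tsum_eq, norm_neg, tsum_mul_left] at h1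
    calc _ ≤ _ := h1
      _ ≤ M * wt i j * (1/2) := by gcongr
      _ = _ := by ring
  have hM0 : 0 ≤ M₀ := by
    have := (norm_nonneg _).trans (hM 0 0)
    exact nonneg_of_mul_nonneg_left this (wt_pos 0 0)
  have hiter : ∀ n : ℕ, ∀ i j, ‖L 0 i j‖ ≤ (M₀ / 2 ^ n) * wt i j := by
    intro n
    induction n with
    | zero => simpa using hM
    | succ n ih =>
      have := hhalf _ (by positivity) ih
      intro i j
      convert this i j using 2
      rw [pow_succ]; field_simp
  have hzero : ∀ i j, L 0 i j = 0 := by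
    intro i j
    rw [← norm_le_zero_iff]
    have ht : Filter.Tendsto (fun n : ℕ => (M₀ / 2 ^ n) * wt i j) Filter.atTop (nhds 0) := by
      have h1 := tendsto_pow_atTop_nhds_zero_of_lt_one (r := (1/2:ℝ)) (by norm_num) (by norm_num)
      have h2 := (h1.const_mul M₀).mul_const (wt i j)
      simp only [mul_zero, zero_mul] at h2
      refine h2.congr fun n => ?_
      simp [div_eq_mul_inv]
    exact ge_of_tendsto' ht (fun n => hiter n i j)
  intro k i j
  have := hgrow 0 le_rfl (by simp [hzero]) k i j
  simpa using this
end Core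
section CoreThm
variable {V : Type*} [NormedAddCommGroup V] [NormedSpace ℝ V] [CompleteSpace V]

noncomputable def cl (x : ℝ) : ℝ := max (-1) (min x 1)

lemma cl_cont : Continuous cl := by unfold cl; fun_prop

lemma cl_abs (x : ℝ) : |cl x| ≤ 1 := by
  unfold cl
  rw [abs_le]
  exact ⟨le_max_left _ _, max_le (by norm_num) (min_le_right _ _)⟩

lemma cl_eq {x : ℝ} (h : |x| ≤ 1) : cl x = x := by
  rw [abs_le] at h
  unfold cl
  rw [min_eq_left h.2, max_eq_right h.1]

lemma Ser.cont {φ : ℝ → ℝ → ℝ → V} {C : ℝ} (h : Ser φ C) :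
    Continuous (fun x : ℝ × ℝ × ℝ => φ (cl x.2.1) (cl x.2.2) (cl x.1)) := by
  obtain ⟨ι, hι, c, k, i, j, hs, hC, hsum⟩ := h
  have e : (fun x : ℝ × ℝ × ℝ => φ (cl x.2.1) (cl x.2.2) (cl x.1)) =
      fun x => ∑' ν, ((cl x.1) ^ (k ν) * (cl x.2.1) ^ (i ν) * (cl x.2.2) ^ (j ν)) • c ν := by
    funext x
    exact (hsum _ _ _ (cl_abs _) (cl_abs _) (cl_abs _)).tsum_eq.symm
  rw [e]
  have := cl_cont
  refine continuous_tsum (fun ν => by fun_prop) hs (fun ν x => ?_)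
  rw [norm_smul]
  have h1 : |cl x.1 ^ (k ν) * (cl x.2.1) ^ (i ν) * (cl x.2.2) ^ (j ν)| ≤ 1 := by
    rw [abs_mul, abs_mul, abs_pow, abs_pow, abs_pow]
    have h1 := pow_le_one₀ (abs_nonneg _) (cl_abs x.1) (n := k ν)
    have h2 := pow_le_one₀ (abs_nonneg _) (cl_abs x.2.1) (n := i ν)
    have h3 := pow_le_one₀ (abs_nonneg _) (cl_abs x.2.2) (n := j ν)
    have : |cl x.1| ^ (k ν) * |cl x.2.1| ^ (i ν) ≤ 1 := mul_le_one₀ h1 (by positivity) h2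
    exact mul_le_one₀ this (by positivity) h3
  have h2 : (1:ℝ) ≤ 2 ^ (k ν) := one_le_pow₀ (by norm_num)
  calc _ ≤ 1 * ‖c ν‖ := by gcongr; exact h1
    _ ≤ ‖c ν‖ * 2 ^ (k ν) := by nlinarith [norm_nonneg (c ν)]

noncomputable def mA : Measure ℝ := volume.restrict (Ioc (-1/2 : ℝ) (1/2))
noncomputable def mQ : Measure ℝ := volume.restrict (Ioc (0 : ℝ) (1/8))
instance : IsFiniteMeasure mA := by unfold mA; infer_instance
instance : IsFiniteMeasure mQ := by unfold mQ; infer_instance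

lemma mAQ_ae : ∀ᵐ y ∂(mA.prod mQ), y.1 ∈ Ioc (-1/2 : ℝ) (1/2) ∧ y.2 ∈ Ioc (0:ℝ) (1/8) := by
  unfold mA mQ
  rw [Measure.prod_restrict]
  filter_upwards [ae_restrict_mem (measurableSet_Ioc.prod measurableSet_Ioc)] with y hy
  exact hy

lemma mBox_ae : ∀ᵐ x ∂(mA.prod (mA.prod mQ)), x.1 ∈ Ioc (-1/2 : ℝ) (1/2) ∧
    x.2.1 ∈ Ioc (-1/2 : ℝ) (1/2) ∧ x.2.2 ∈ Ioc (0:ℝ) (1/8) := by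
  unfold mA mQ
  rw [Measure.prod_restrict, Measure.prod_restrict]
  filter_upwards [ae_restrict_mem (measurableSet_Ioc.prod (measurableSet_Ioc.prod measurableSet_Ioc))] with y hy
  exact hy

lemma box_int {G : ℝ × ℝ × ℝ → V} (hG : Continuous G) : Integrable G (mA.prod (mA.prod mQ)) := by
  obtain ⟨K, hK⟩ := ((isCompact_Icc (a := (-1/2:ℝ)) (b := 1/2)).prod
    ((isCompact_Icc (a := (-1/2:ℝ)) (b := 1/2)).prod (isCompact_Icc (a := (0:ℝ)) (b := 1/8)))).exists_bound_of_continuousOn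
    hG.continuousOn
  refine Integrable.of_bound hG.aestronglyMeasurable K ?_
  filter_upwards [mBox_ae] with x hx
  exact hK x ⟨Ioc_subset_Icc_self hx.1, Ioc_subset_Icc_self hx.2.1, Ioc_subset_Icc_self hx.2.2⟩

lemma box_iter {G : ℝ × ℝ × ℝ → V} (hG : Continuous G) : ∫ x, G x ∂(mA.prod (mA.prod mQ)) =
    ∫ α in (-1/2:ℝ)..(1/2), ∫ a in (-1/2:ℝ)..(1/2), ∫ q in (0:ℝ)..(1/8), G (α, a, q) := by
  rw [integral_prod _ (box_int hG), intervalIntegral.integral_of_le (by norm_num)]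
  refine integral_congr_ae ?_
  filter_upwards with α
  have hi : Integrable (fun y => G (α, y)) (mA.prod mQ) := by
    obtain ⟨K, hK⟩ := ((isCompact_Icc (a := (-1/2:ℝ)) (b := 1/2)).prod
     (isCompact_Icc (a := (0:ℝ)) (b := 1/8))).exists_bound_of_continuousOn (f := fun y => G (α, y))
      (by fun_prop)
    refine Integrable.of_bound (Continuous.aestronglyMeasurable (by fun_prop)) K ?_
    filter_upwards [mAQ_ae] with x hx
    exact hK x ⟨Ioc_subset_Icc_self hx.1, Ioc_subset_Icc_self hx.2⟩
  rw [integral_prod _ hi, intervalIntegral.integral_of_le (by norm_num)]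
  refine integral_congr_ae ?_
  filter_upwards with a
  rw [intervalIntegral.integral_of_le (by norm_num)]
  rfl

lemma ii_cont {X : Type*} [TopologicalSpace X] [FirstCountableTopology X] {G : X → ℝ → V} (hG : Continuous (fun x : X × ℝ => G x.1 x.2)) (a b : ℝ) :
    Continuous (fun x => ∫ q in a..b, G x q) :=
  intervalIntegral.continuous_parametric_intervalIntegral_of_continuous' hG a b

lemma core (F : ℝ → ℝ → V) (hF : Continuous fun x : ℝ × ℝ => F x.1 x.2)
    (h0 : ∀ α σ, 1/16 < σ + α^2 → F α σ = 0) (W : ℝ → ℝ → ℝ → V →L[ℝ] V)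
    (hW : Ser (fun a q α => W a q α - 1) (1/2))
    (hint : ∀ a ∈ Icc (-1/2:ℝ) (1/2), ∀ q ∈ Icc (0:ℝ) (1/8),
      ∫ α in (-1/2:ℝ)..(1/2), W a q α (F α (q + (a - α)^2)) = 0) :
    ∀ α σ, 0 ≤ σ → F α σ = 0 := by
  have hcF : ∀ α, Continuous (F α) := fun α => by
    exact hF.comp (by fun_prop : Continuous fun σ : ℝ => (α, σ))
  set μ := mA.prod (mA.prod mQ) with hμ
  set K : ℝ × ℝ × ℝ → V := fun x => F x.1 (x.2.2 + (x.2.1 - x.1)^2) with hKdef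
  have hK : Continuous K := hF.comp (by fun_prop : Continuous fun x : ℝ × ℝ × ℝ => (x.1, x.2.2 + (x.2.1 - x.1)^2))
  set L : ℕ → ℕ → ℕ → V := fun k i j => ∫ x, (x.1 ^ k * x.2.1 ^ i * x.2.2 ^ j) • K x ∂μ with hL
  have hLi : ∀ k i j, Integrable (fun x => (x.1 ^ k * x.2.1 ^ i * x.2.2 ^ j) • K x) μ :=
    fun k i j => box_int (by fun_prop)
  have hLiter : ∀ k i j, L k i j = ∫ α in (-1/2:ℝ)..(1/2), α ^ k • ∫ a in (-1/2:ℝ)..(1/2), a ^ i • ∫ q in (0:ℝ)..(1/8),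
      q ^ j • K (α, a, q) := by
    intro k i j
    rw [hL]
    simp only
    rw [box_iter (by fun_prop)]
    simp only [← intervalIntegral.integral_smul, smul_smul]
    simp only [mul_assoc]
  have hIc : ∀ j, Continuous (fun x : ℝ × ℝ => ∫ q in (0:ℝ)..(1/8), q ^ j • K (x.1, x.2, q)) := by
    intro j
    apply ii_cont
    have : Continuous fun x : (ℝ × ℝ) × ℝ => K (x.1.1, x.1.2, x.2) := hK.comp (by fun_prop)
    fun_prop
  have hIIc : ∀ i j, Continuous (fun α => ∫ a in (-1/2:ℝ)..(1/2), a ^ i • ∫ q in (0:ℝ)..(1/8), q ^ j • K (α, a, q)) := by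
    intro i j
    apply ii_cont
    have := hIc j
    fun_prop
  have hrec : ∀ k i j, L (k+1) i j = L k (i+1) j - (i / (2 * (j + 1)) : ℝ) • L k (i-1) (j+1) := by
    intro k i j
    have e : L k (i+1) j - L (k+1) i j = (i / (2 * (j + 1)) : ℝ) • L k (i-1) (j+1) := by
      rw [hL]
      simp only
      rw [← integral_sub (hLi _ _ _) (hLi _ _ _)]
      have e1 : ∀ x : ℝ × ℝ × ℝ, (x.1 ^ k * x.2.1 ^ (i+1) * x.2.2 ^ j) • K x - (x.1 ^ (k+1) * x.2.1 ^ i * x.2.2 ^ j) • K x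
          = (x.1 ^ k * ((x.2.1 - x.1) * x.2.1 ^ i * x.2.2 ^ j)) • K x := by
        intro x; rw [← sub_smul]; congr 1; ring
      simp only [e1]
      rw [box_iter (by fun_prop), box_iter (by fun_prop), ← intervalIntegral.integral_smul]
      congr 1
      funext α
      have := ibp (F α) (hcF α) α (h0 α) i j
      simp only [mul_smul (α ^ k), mul_assoc (α ^ k), intervalIntegral.integral_smul]
      simp only [hKdef]
      rw [this, smul_comm]
    rw [← e]; abel
  obtain ⟨ι, hι, c, k, i, j, hs, hC, hsum⟩ := hW
  obtain ⟨B, hB⟩ : ∃ B, B = ∫ x, ‖K x‖ ∂μ := ⟨_, rfl⟩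
  have hbd : ∀ k i j, ∫ x, ‖(x.1 ^ k * x.2.1 ^ i * x.2.2 ^ j) • K x‖ ∂μ ≤ ((1/2)^i * (1/8) ^ j) * B := by
    intro k i j
    rw [hB, ← integral_const_mul]
    refine integral_mono_ae (hLi k i j).norm ((box_int hK).norm.const_mul _) ?_
    filter_upwards [mBox_ae] with x hx
    obtain ⟨⟨h1,h2⟩,⟨h3,h4⟩,h5,h6⟩ := hx
    simp only [norm_smul, norm_mul, norm_pow, Real.norm_eq_abs]
    have h1' : |x.1| ≤ 1 := by rw [abs_le]; constructor <;> linarith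
    have h2' : |x.2.1| ≤ 1/2 := by rw [abs_le]; constructor <;> linarith
    have h3' : |x.2.2| ≤ 1/8 := by rw [abs_le]; constructor <;> linarith
    have h4' := pow_le_one₀ (abs_nonneg _) h1' (n := k)
    gcongr
    calc _ ≤ 1 * |x.2.1| ^ i := by gcongr
      _ ≤ _ := by rw [one_mul]; gcongr
  have hB0 : 0 ≤ B := by rw [hB]; exact integral_nonneg fun _ => norm_nonneg _
  have hM : ∀ i j, ‖L 0 i j‖ ≤ B * wt i j := by
    intro i j
    calc _ ≤ _ := norm_integral_le_integral_norm _
      _ ≤ _ := hbd 0 i j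
      _ ≤ B * wt i j := by rw [mul_comm]; gcongr; exact wt_lower _ _
  have hrel : ∀ i' j', HasSum (fun ν => c ν (L (k ν) (i' + i ν) (j' + j ν))) (- L 0 i' j') := by
    intro i' j'
    set G : ι → ℝ × ℝ × ℝ → V := fun ν x => c ν ((x.1 ^ (k ν) * x.2.1 ^ (i' + i ν) * x.2.2 ^ (j' + j ν)) • K x) with hG
    have hGi : ∀ ν, Integrable (G ν) μ := fun ν => box_int (by fun_prop)
    have hGs : Summable fun ν => ∫ x, ‖G ν x‖ ∂μ := by
      refine Summable.of_nonneg_of_le (fun ν => integral_nonneg fun _ => norm_nonneg _) (fun ν => ?_) (hs.mul_right B)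
      calc _ ≤ ∫ x, ‖c ν‖ * ‖(x.1 ^ (k ν) * x.2.1 ^ (i' + i ν) * x.2.2 ^ (j' + j ν)) • K x‖ ∂μ := by
            refine integral_mono (hGi ν).norm ((hLi _ _ _).norm.const_mul _) fun x => ?_
            exact (c ν).le_opNorm _
        _ ≤ ‖c ν‖ * (((1/2)^(i' + i ν) * (1/8) ^ (j' + j ν)) * B) := by
            rw [integral_const_mul]; gcongr; exact hbd _ _ _
        _ ≤ ‖c ν‖ * ((1 * 1) * B) := by
            gcongr <;> exact pow_le_one₀ (by norm_num) (by norm_num)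
        _ ≤ _ := by
            have h2 : (1:ℝ) ≤ 2 ^ (k ν) := one_le_pow₀ (by norm_num)
            have : 0 ≤ ‖c ν‖ * B := by positivity
            nlinarith
    have hmain := hasSum_integral_of_summable_integral_norm hGi hGs
    have e1 : ∀ ν, ∫ x, G ν x ∂μ = c ν (L (k ν) (i' + i ν) (j' + j ν)) := by
      intro ν
      exact (c ν).integral_comp_comm (hLi _ _ _)
    simp only [e1] at hmain
    convert hmain using 1
    have hWc := Ser.cont (φ := fun a q α => W a q α - 1) (C := 1/2) ⟨ι, hι, c, k, i, j, hs, hC, hsum⟩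
    set W' : ℝ × ℝ × ℝ → V →L[ℝ] V := fun x => W (cl x.2.1) (cl x.2.2) (cl x.1) with hW'
    have hWc' : Continuous W' := by
      have := hWc.add (continuous_const (y := (1 : V →L[ℝ] V)))
      exact this.congr fun x => sub_add_cancel _ _
    have hcW : Continuous fun x : ℝ × ℝ × ℝ => (x.2.1 ^ i' * x.2.2 ^ j') • (W' x) (K x) :=
      (by fun_prop : Continuous fun x : ℝ × ℝ × ℝ => x.2.1 ^ i' * x.2.2 ^ j').smul (hWc'.clm_apply hK)
    have e2 : ∫ x, ∑' ν, G ν x ∂μ = ∫ x, ((x.2.1 ^ i' * x.2.2 ^ j') • (W' x) (K x) - (x.1 ^ 0 * x.2.1 ^ i' * x.2.2 ^ j') • K x) ∂μ := by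
      refine integral_congr_ae ?_
      filter_upwards [mBox_ae] with x hx
      obtain ⟨⟨h1,h2⟩,⟨h3,h4⟩,h5,h6⟩ := hx
      have h1' : |x.1| ≤ 1 := by rw [abs_le]; constructor <;> linarith
      have h2' : |x.2.1| ≤ 1 := by rw [abs_le]; constructor <;> linarith
      have h3' : |x.2.2| ≤ 1 := by rw [abs_le]; constructor <;> linarith
      have h := hsum x.2.1 x.2.2 x.1 h2' h3' h1'
      have h' := (h.mapL (ContinuousLinearMap.apply ℝ V (K x))).const_smul (x.2.1 ^ i' * x.2.2 ^ j')
      have e3 : ∀ ν, G ν x = (x.2.1 ^ i' * x.2.2 ^ j') • (ContinuousLinearMap.apply ℝ V (K x)) ((x.1 ^ (k ν) * x.2.1 ^ (i ν) * x.2.2 ^ (j ν)) • c ν) := by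
        intro ν
        simp only [hG, map_smul, ContinuousLinearMap.apply_apply, smul_smul]
        congr 1; ring
      simp only [e3]
      rw [h'.tsum_eq]
      simp [hW', cl_eq h1', cl_eq h2', cl_eq h3', smul_sub]
    rw [e2, integral_sub (box_int hcW) (hLi 0 i' j')]
    have e4 : ∫ x, (x.2.1 ^ i' * x.2.2 ^ j') • (W' x) (K x) ∂μ = 0 := by
      rw [hμ, integral_prod_symm _ (box_int hcW)]
      refine integral_eq_zero_of_ae ?_
      filter_upwards [mAQ_ae] with y hy
      simp only [Pi.zero_apply]
      rw [integral_smul]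
      have h := hint y.1 (Ioc_subset_Icc_self hy.1) y.2 (Ioc_subset_Icc_self hy.2)
      rw [intervalIntegral.integral_of_le (by norm_num)] at h
      have h' : ∫ x, (W' (x, y)) (K (x, y)) ∂mA = 0 := by
        rw [← h]
        unfold mA
        refine setIntegral_congr_fun measurableSet_Ioc fun x hx => ?_
        obtain ⟨⟨h3,h4⟩,h5,h6⟩ := hy
        obtain ⟨h1, h2⟩ := hx
        have h1' : |x| ≤ 1 := by rw [abs_le]; constructor <;> linarith
        have h2' : |y.1| ≤ 1 := by rw [abs_le]; constructor <;> linarith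
        have h3' : |y.2| ≤ 1 := by rw [abs_le]; constructor <;> linarith
        simp only [hW', hKdef, cl_eq h1', cl_eq h2', cl_eq h3']
      rw [h', smul_zero]
    rw [e4, zero_sub]
  have hL0 := moment_decay L B hM hrec c k i j hs hC hrel
  intro α σ hσ
  by_cases hout : 1/16 < σ + α ^ 2
  · exact h0 _ _ hout
  push Not at hout
  have hα : α ∈ Icc (-1/2:ℝ) (1/2) := by constructor <;> nlinarith
  have hσ' : σ ∈ Icc (0:ℝ) (1/8) := ⟨hσ, by nlinarith⟩
  have s1 : ∀ i j, (∫ a in (-1/2:ℝ)..(1/2), a ^ i • ∫ q in (0:ℝ)..(1/8), q ^ j • K (α, a, q)) = 0 := by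
    intro i j
    refine moment_vec (-1/2) (1/2) (by norm_num) _ (hIIc i j) (fun k => ?_) α hα
    rw [← hLiter, hL0]
  have s2 : ∀ j, (∫ q in (0:ℝ)..(1/8), q ^ j • K (α, α, q)) = 0 := by
    intro j
    refine moment_vec (-1/2) (1/2) (by norm_num) (fun a => ∫ q in (0:ℝ)..(1/8), q ^ j • K (α, a, q)) ?_ (fun i => s1 i j) α hα
    exact (hIc j).comp (by fun_prop : Continuous fun a : ℝ => (α, a))
  have s3 := moment_vec 0 (1/8) (by norm_num) (fun q => K (α, α, q)) (by fun_prop) s2 σ hσ'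
  simpa [hKdef] using s3
end CoreThm
lemma bil_deriv {E : Type*} [NormedAddCommGroup E] [NormedSpace ℝ E] (T : E →L[ℝ] E →L[ℝ] E)
    {X Y : ℝ → E} {X' Y' : E} {t : ℝ} (hX : HasDerivAt X X' t) (hY : HasDerivAt Y Y' t) :
    HasDerivAt (fun t => T (X t) (Y t)) (T X' (Y t) + T (X t) Y') t := by
  have h1 : HasDerivAt (fun t => T (X t)) (T X') t := T.hasFDerivAt.comp_hasDerivAt t hX
  exact h1.clm_apply hY

section MatLayer
open Matrix
attribute [local instance] Matrix.normedAddCommGroup Matrix.normedSpace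
variable {N : ℕ}

noncomputable def Lm (N : ℕ) : Matrix (Fin N) (Fin N) ℂ →L[ℝ] (Matrix (Fin N) (Fin N) ℂ →L[ℝ] Matrix (Fin N) (Fin N) ℂ) :=
  LinearMap.toContinuousLinearMap ((LinearMap.toContinuousLinearMap (𝕜 := ℝ) (E := Matrix (Fin N) (Fin N) ℂ) (F' := Matrix (Fin N) (Fin N) ℂ)).toLinearMap ∘ₗ
    LinearMap.mul ℝ (Matrix (Fin N) (Fin N) ℂ))

noncomputable def Rm (N : ℕ) : Matrix (Fin N) (Fin N) ℂ →L[ℝ] (Matrix (Fin N) (Fin N) ℂ →L[ℝ] Matrix (Fin N) (Fin N) ℂ) :=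
  LinearMap.toContinuousLinearMap ((LinearMap.toContinuousLinearMap (𝕜 := ℝ) (E := Matrix (Fin N) (Fin N) ℂ) (F' := Matrix (Fin N) (Fin N) ℂ)).toLinearMap ∘ₗ
    (LinearMap.mul ℝ (Matrix (Fin N) (Fin N) ℂ)).flip)

noncomputable def Mv (N : ℕ) : Matrix (Fin N) (Fin N) ℂ →L[ℝ] ((Fin N → ℂ) →L[ℝ] (Fin N → ℂ)) :=
  LinearMap.toContinuousLinearMap ((LinearMap.toContinuousLinearMap (𝕜 := ℝ) (E := Fin N → ℂ) (F' := Fin N → ℂ)).toLinearMap ∘ₗ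
    (LinearMap.mk₂ ℝ (fun (A : Matrix (Fin N) (Fin N) ℂ) (v : Fin N → ℂ) => A *ᵥ v)
      (fun A B v => Matrix.add_mulVec A B v) (fun c A v => Matrix.smul_mulVec c A v)
      (fun A v w => Matrix.mulVec_add A v w) (fun c A v => Matrix.mulVec_smul A c v)))

@[simp] lemma Lm_apply (A B : Matrix (Fin N) (Fin N) ℂ) : Lm N A B = A * B := rfl
@[simp] lemma Rm_apply (A B : Matrix (Fin N) (Fin N) ℂ) : Rm N A B = B * A := rfl
@[simp] lemma Mv_apply (A : Matrix (Fin N) (Fin N) ℂ) (v : Fin N → ℂ) : Mv N A v = A *ᵥ v := rfl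

lemma mat_complete (N : ℕ) : CompleteSpace (Matrix (Fin N) (Fin N) ℂ) := FiniteDimensional.complete ℝ _

lemma mat_hasDerivAt_mul {X Y : ℝ → Matrix (Fin N) (Fin N) ℂ} {X' Y' : Matrix (Fin N) (Fin N) ℂ} {t : ℝ}
    (hX : HasDerivAt X X' t) (hY : HasDerivAt Y Y' t) :
    HasDerivAt (fun t => X t * Y t) (X' * Y t + X t * Y') t := by
  exact bil_deriv (Lm N) hX hY

lemma fund_pair (M : ℝ → Matrix (Fin N) (Fin N) ℂ) (hM : Continuous M) :
    ∃ W U : ℝ → Matrix (Fin N) (Fin N) ℂ, (∀ t, HasDerivAt W (W t * M t) t) ∧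
      (∀ t, HasDerivAt U (-(M t * U t)) t) ∧ (∀ t, W t * U t = 1) ∧
      ∀ t, HasSum (fun n => dys (fun s => Rm N (M s)) 1 n t) (W t) := by
  have := mat_complete N
  obtain ⟨W, hW0, hW, hWs⟩ := ode_exists (fun s => Rm N (M s)) (by fun_prop) 1
  obtain ⟨U, hU0, hU, -⟩ := ode_exists (fun s => -(Lm N (M s))) (by fun_prop) 1
  refine ⟨W, U, hW, hU, ?_, hWs⟩
  have hd : ∀ t, HasDerivAt (fun t => W t * U t) 0 t := by
    intro t
    have h := mat_hasDerivAt_mul (hW t) (hU t)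
    refine h.congr_deriv ?_
    show W t * M t * U t + W t * (-(M t * U t)) = 0
    rw [mul_neg, mul_assoc, add_neg_cancel]
  intro t
  have h := is_const_of_deriv_eq_zero (f := fun t => W t * U t) (fun t => (hd t).differentiableAt) (fun t => (hd t).deriv) t 0
  simpa [hW0, hU0] using h

lemma line_lemma (B : ℝ → Matrix (Fin N) (Fin N) ℂ) (g : ℝ → Fin N → ℂ)
    (hg : Continuous g) (hgs : HasCompactSupport g)
    (hint : ∀ U : ℝ → Matrix (Fin N) (Fin N) ℂ,
          (∀ t : ℝ, HasDerivAt U (-(B t * U t)) t) →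
          U 0 = 1 → (∀ t : ℝ, IsUnit (U t)) →
          (∫ t : ℝ, (U t)⁻¹ *ᵥ g t) = 0)
    (τ κ : ℝ) (hκ : κ ≠ 0) (W U : ℝ → Matrix (Fin N) (Fin N) ℂ)
    (hW : ∀ t, HasDerivAt W (W t * (κ • B (τ + κ * t))) t)
    (hU : ∀ t, HasDerivAt U (-((κ • B (τ + κ * t)) * U t)) t) (hWU : ∀ t, W t * U t = 1) :
    ∫ α, W α *ᵥ g (τ + κ * α) = 0 := by
  have hUW : ∀ t, U t * W t = 1 := fun t => mul_eq_one_comm.mp (hWU t)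
  set s : ℝ → ℝ := fun t => (t - τ) / κ with hs
  have hss : ∀ t, τ + κ * s t = t := by intro t; simp only [hs]; field_simp; ring
  have hsd : ∀ t, HasDerivAt s κ⁻¹ t := by
    intro t
    have := ((hasDerivAt_id t).sub_const τ).div_const κ
    simpa [hs] using this
  have hinv : ∀ t, (U (s t) * W (s 0)) * (U (s 0) * W (s t)) = 1 := by
    intro t
    calc _ = U (s t) * (W (s 0) * U (s 0)) * W (s t) := by simp only [mul_assoc]
      _ = 1 := by rw [hWU, mul_one, hUW]
  have h := hint (fun t => U (s t) * W (s 0)) (fun t => by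
      have h1 := (hU (s t)).scomp t (hsd t)
      have h2 := mat_hasDerivAt_mul h1 (hasDerivAt_const t (W (s 0)))
      refine h2.congr_deriv ?_
      simp only [hss, mul_zero, add_zero, smul_mul_assoc, smul_neg, smul_smul, inv_mul_cancel₀ hκ, one_smul]
      simp [mul_assoc]) (hUW _) (fun t => by
      exact IsUnit.of_mul_eq_one _ (hinv t))
  have hWc : Continuous W := continuous_iff_continuousAt.mpr fun t => (hW t).continuousAt
  have hsc : Continuous s := by simp only [hs]; fun_prop
  have hcont : Continuous (fun t => W (s t) *ᵥ g t) := by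
    have : Continuous (fun t => Mv N (W (s t)) (g t)) := by fun_prop
    exact this
  have hcs : HasCompactSupport (fun t => W (s t) *ᵥ g t) := by
    refine hgs.mono ?_
    intro t ht
    rw [Function.mem_support] at ht ⊢
    contrapose! ht
    rw [ht, Matrix.mulVec_zero]
  have hi := hcont.integrable_of_hasCompactSupport hcs (μ := volume)
  have e1 : ∀ t, (U (s t) * W (s 0))⁻¹ *ᵥ g t = Mv N (U (s 0)) (W (s t) *ᵥ g t) := by
    intro t
    rw [Matrix.inv_eq_right_inv (hinv t), Mv_apply, Matrix.mulVec_mulVec]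
  simp only [e1] at h
  rw [ContinuousLinearMap.integral_comp_comm _ hi, Mv_apply] at h
  have h2 : ∫ t, W (s t) *ᵥ g t = 0 := by
    have h3 := congrArg (fun x => W (s 0) *ᵥ x) h
    simp only [Matrix.mulVec_mulVec, hWU, Matrix.one_mulVec, Matrix.mulVec_zero] at h3
    exact h3
  have h4 := MeasureTheory.Measure.integral_comp_mul_left (fun x => W (s (τ + x)) *ᵥ g (τ + x)) κ
  rw [integral_add_left_eq_self (fun x => W (s x) *ᵥ g x) τ, h2, smul_zero] at h4
  rw [← h4]
  congr 1
  funext α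
  simp only [hs]
  congr 2
  field_simp
  ring
end MatLayer
section Geometry
open Matrix
open scoped RealInnerProductSpace
attribute [local instance] Matrix.normedAddCommGroup Matrix.normedSpace
variable {N : ℕ} {H : Type*} [NormedAddCommGroup H] [InnerProductSpace ℝ H]

noncomputable def bb (a q : ℝ) : ℝ := -a^2 - q
noncomputable def vv (x₀ v₀ : H) (a : ℝ) : H := (√(1 + a^2))⁻¹ • (v₀ - a • x₀)
noncomputable def pp (x₀ v₀ z : H) (a q : ℝ) : H :=
  z + (1 - bb a q) • x₀ + (a * (1 - bb a q) * (1 + a^2)⁻¹) • (v₀ - a • x₀)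
noncomputable def PP (x₀ v₀ z : H) (a q α : ℝ) : H :=
  z + (1 - bb a q) • x₀ + (2 * α) • (v₀ - a • x₀)
noncomputable def tt (a q : ℝ) : ℝ := -(a * (1 - bb a q)) * (√(1 + a^2))⁻¹
noncomputable def GG (x₀ v₀ : H) (A : H × H × H → Matrix (Fin N) (Fin N) ℂ) (y : H × ℝ × ℝ × ℝ) :
    Matrix (Fin N) (Fin N) ℂ :=
  (2 * √(1 + y.2.1^2)) • A (pp x₀ v₀ y.1 y.2.1 y.2.2.1, vv x₀ v₀ y.2.1, PP x₀ v₀ y.1 y.2.1 y.2.2.1 y.2.2.2)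

attribute [local fun_prop] analyticAt_fst analyticAt_snd

lemma sq_pos' (a : ℝ) : 0 < 1 + a^2 := by positivity

lemma PP_eq (x₀ v₀ z : H) (a q α : ℝ) :
    PP x₀ v₀ z a q α = pp x₀ v₀ z a q + (tt a q + 2 * √(1 + a^2) * α) • vv x₀ v₀ a := by
  unfold PP pp tt vv
  rw [smul_smul, add_assoc (z + _), ← add_smul]
  congr 2
  have h1 : √(1 + a^2) ≠ 0 := (Real.sqrt_pos.mpr (sq_pos' a)).ne'
  have h2 := Real.sq_sqrt (sq_pos' a).le
  have h3 := (sq_pos' a).ne'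
  have h4 : (√(1 + a^2))⁻¹ * (√(1 + a^2))⁻¹ = (1 + a^2)⁻¹ := by rw [← mul_inv, ← sq, h2]
  have h5 : √(1 + a^2) * (√(1 + a^2))⁻¹ = 1 := mul_inv_cancel₀ h1
  linear_combination (a * (1 - bb a q)) * h4 - 2 * α * h5

lemma GG_analytic (x₀ v₀ : H) (A : H × H × H → Matrix (Fin N) (Fin N) ℂ) (hA : AnalyticOnNhd ℝ A Set.univ) :
    AnalyticAt ℝ (GG x₀ v₀ A) 0 := by
  have hs : AnalyticAt ℝ (fun y : H × ℝ × ℝ × ℝ => √(1 + y.2.1^2)) 0 := by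
    have h1 : AnalyticAt ℝ Real.sqrt (1 + (0 : H × ℝ × ℝ × ℝ).2.1^2) :=
      (Real.contDiffAt_sqrt (n := ⊤) (by simp)).analyticAt
    exact h1.comp (f := fun y : H × ℝ × ℝ × ℝ => 1 + y.2.1^2) (by fun_prop)
  have hsi : AnalyticAt ℝ (fun y : H × ℝ × ℝ × ℝ => (√(1 + y.2.1^2))⁻¹) 0 := hs.inv (by simp)
  have hi : AnalyticAt ℝ (fun y : H × ℝ × ℝ × ℝ => (1 + y.2.1^2)⁻¹) 0 :=
    AnalyticAt.inv (by fun_prop) (by simp)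
  have hb : AnalyticAt ℝ (fun y : H × ℝ × ℝ × ℝ => 1 - bb y.2.1 y.2.2.1) 0 := by
    unfold bb; fun_prop (disch := simp)
  have hp : AnalyticAt ℝ (fun y : H × ℝ × ℝ × ℝ => pp x₀ v₀ y.1 y.2.1 y.2.2.1) 0 := by
    unfold pp; fun_prop (disch := simp)
  have hv : AnalyticAt ℝ (fun y : H × ℝ × ℝ × ℝ => vv x₀ v₀ y.2.1) 0 := by
    unfold vv; fun_prop (disch := simp)
  have hP : AnalyticAt ℝ (fun y : H × ℝ × ℝ × ℝ => PP x₀ v₀ y.1 y.2.1 y.2.2.1 y.2.2.2) 0 := by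
    unfold PP; fun_prop (disch := simp)
  have hA' := hA (pp x₀ v₀ (0 : H) 0 0, vv x₀ v₀ 0, PP x₀ v₀ (0:H) 0 0 0) (mem_univ _)
  have h3 := AnalyticAt.comp (g := A) (f := fun y : H × ℝ × ℝ × ℝ => (pp x₀ v₀ y.1 y.2.1 y.2.2.1, vv x₀ v₀ y.2.1, PP x₀ v₀ y.1 y.2.1 y.2.2.1 y.2.2.2)) (x := 0) hA' (hp.prod (hv.prod hP))
  have h2 : AnalyticAt ℝ (fun y : H × ℝ × ℝ × ℝ => 2 * √(1 + y.2.1^2)) 0 := by fun_prop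
  exact h2.smul h3

lemma small_lines (x₀ v₀ : H) {δ : ℝ} (hδ : 0 < δ) : ∃ r > 0, ∀ (z : H) (a q : ℝ), ‖z‖ ≤ r → |a| ≤ r → |q| ≤ r →
    ‖vv x₀ v₀ a - v₀‖ < δ ∧ ‖pp x₀ v₀ z a q - x₀‖ < δ := by
  have hc : Continuous (fun y : H × ℝ × ℝ => (vv x₀ v₀ y.2.1 - v₀, pp x₀ v₀ y.1 y.2.1 y.2.2 - x₀)) := by
    unfold vv pp bb
    have h1 : ∀ y : H × ℝ × ℝ, √(1 + y.2.1^2) ≠ 0 := fun y => (Real.sqrt_pos.mpr (sq_pos' _)).ne'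
    have h2 : ∀ y : H × ℝ × ℝ, 1 + y.2.1^2 ≠ 0 := fun y => (sq_pos' _).ne'
    have h3 : Continuous fun y : H × ℝ × ℝ => (√(1 + y.2.1^2))⁻¹ := Continuous.inv₀ (by fun_prop) h1
    have h4 : Continuous fun y : H × ℝ × ℝ => (1 + y.2.1^2)⁻¹ := Continuous.inv₀ (by fun_prop) h2
    fun_prop
  have h0 := Metric.continuousAt_iff.mp (hc.continuousAt (x := 0)) δ hδ
  obtain ⟨r, hr, h⟩ := h0
  refine ⟨r/2, by positivity, fun z a q hz ha hq => ?_⟩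
  have h1 := @h (z, a, q) (by
    rw [dist_zero_right, Prod.norm_def, Prod.norm_def, max_lt_iff, max_lt_iff]
    refine ⟨?_, ?_, ?_⟩
    · simp only; linarith
    · simp only [Real.norm_eq_abs]; linarith
    · simp only [Real.norm_eq_abs]; linarith)
  have e : (vv x₀ v₀ (0 : H × ℝ × ℝ).2.1 - v₀, pp x₀ v₀ (0 : H × ℝ × ℝ).1 (0 : H × ℝ × ℝ).2.1 (0 : H × ℝ × ℝ).2.2 - x₀) = (0 : H × H) := by
    simp [vv, pp, bb]
  simp only at h1
  simp only [e, dist_zero_right, Prod.norm_def, max_lt_iff] at h1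
  exact h1
end Geometry
section Final
open Matrix
open scoped RealInnerProductSpace
attribute [local instance] Matrix.normedAddCommGroup Matrix.normedSpace
variable {N : ℕ} {H : Type*} [NormedAddCommGroup H] [InnerProductSpace ℝ H]

lemma vv_norm (x₀ v₀ : H) (hx₀ : ‖x₀‖ = 1) (hv₀ : ‖v₀‖ = 1) (hxv : ⟪x₀, v₀⟫ = 0) (a : ℝ) : ‖vv x₀ v₀ a‖ = 1 := by
  have h1 : ‖v₀ - a • x₀‖ = √(1 + a^2) := by
    rw [eq_comm, Real.sqrt_eq_iff_eq_sq (sq_pos' a).le (norm_nonneg _), norm_sub_sq_real, inner_smul_right,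
      real_inner_comm, hxv, norm_smul, hx₀, hv₀, Real.norm_eq_abs]
    simp
  unfold vv
  rw [norm_smul, h1, norm_inv, Real.norm_of_nonneg (Real.sqrt_nonneg _)]
  exact inv_mul_cancel₀ (Real.sqrt_pos.mpr (sq_pos' a)).ne'

lemma pp_vv (x₀ v₀ z : H) (hx₀ : ‖x₀‖ = 1) (hv₀ : ‖v₀‖ = 1) (hxv : ⟪x₀, v₀⟫ = 0)
    (hzx : ⟪z, x₀⟫ = 0) (hzv : ⟪z, v₀⟫ = 0) (a q : ℝ) : ⟪pp x₀ v₀ z a q, vv x₀ v₀ a⟫ = 0 := by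
  have hvx : ⟪v₀, x₀⟫ = 0 := by rw [real_inner_comm]; exact hxv
  have h1 : ⟪x₀, x₀⟫ = (1:ℝ) := by rw [real_inner_self_eq_norm_sq, hx₀]; norm_num
  have h2 : ⟪v₀, v₀⟫ = (1:ℝ) := by rw [real_inner_self_eq_norm_sq, hv₀]; norm_num
  unfold pp vv
  simp only [inner_add_left, inner_sub_left, inner_sub_right, inner_smul_left, inner_smul_right, hxv, hvx, hzx, hzv, h1, h2]
  have h3 := mul_inv_cancel₀ (sq_pos' a).ne'
  simp only [conj_trivial]
  linear_combination ((√(1 + a^2))⁻¹ * a * (1 - bb a q)) * h3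

noncomputable def pt (x₀ v₀ z : H) (r α σ : ℝ) : H :=
  z + (1 - r^2 * (1/16 + α^2 - σ)) • x₀ + (2 * r * α) • v₀

lemma pt_line (x₀ v₀ z : H) (r a q α : ℝ) :
    PP x₀ v₀ z (r * a) (r^2 * q - r^2/16) (r * α) = pt x₀ v₀ z r α (q + (a - α)^2) := by
  unfold PP pt bb
  module

lemma pt_norm (x₀ v₀ z : H) (hx₀ : ‖x₀‖ = 1) (hv₀ : ‖v₀‖ = 1) (hxv : ⟪x₀, v₀⟫ = 0)
    (hzx : ⟪z, x₀⟫ = 0) (hzv : ⟪z, v₀⟫ = 0) (r α σ : ℝ) :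
    ‖pt x₀ v₀ z r α σ‖^2 = ‖z‖^2 + (1 - r^2 * (1/16 + α^2 - σ))^2 + (2 * r * α)^2 := by
  have hvx : ⟪v₀, x₀⟫ = 0 := by rw [real_inner_comm]; exact hxv
  have hxz : ⟪x₀, z⟫ = 0 := by rw [real_inner_comm]; exact hzx
  have hvz : ⟪v₀, z⟫ = 0 := by rw [real_inner_comm]; exact hzv
  have h1 : ⟪x₀, x₀⟫ = (1:ℝ) := by rw [real_inner_self_eq_norm_sq, hx₀]; norm_num
  have h2 : ⟪v₀, v₀⟫ = (1:ℝ) := by rw [real_inner_self_eq_norm_sq, hv₀]; norm_num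
  rw [← real_inner_self_eq_norm_sq, ← real_inner_self_eq_norm_sq]
  unfold pt
  simp only [inner_add_left, inner_add_right, inner_smul_left, inner_smul_right, hxv, hvx, hzx, hzv, hxz, hvz, h1, h2]
  simp only [conj_trivial]
  ring

lemma abs_ser {E V : Type*} [NormedAddCommGroup E] [NormedSpace ℝ E] [CompleteSpace E]
    [NormedAddCommGroup V] [NormedSpace ℝ V] (T : E →L[ℝ] E →L[ℝ] E) (S : E →L[ℝ] V →L[ℝ] V) (e : E) (e1 : V →L[ℝ] V) (he : S e = e1) :
    ∃ η > (0:ℝ), ∀ (r C : ℝ) (G W : ℝ → ℝ → ℝ → E), 0 ≤ r → 0 ≤ C → r * C ≤ η → Ser G C →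
      (∀ a q α, HasSum (fun n => dys (fun s => T (r • G a q s)) e n α) (W a q α)) →
      Ser (fun a q α => S (W a q α) - e1) (1/2) := by
  set D := 1 + 4 * ‖T‖ + 8 * (‖S‖ * ‖T‖ * ‖e‖) with hD
  have hT0 : 0 ≤ ‖T‖ := T.opNorm_nonneg
  have hS0 : 0 ≤ ‖S‖ * ‖T‖ * ‖e‖ := by positivity
  have hD1 : 1 ≤ D := by rw [hD]; linarith
  refine ⟨D⁻¹, by positivity, fun r C G W hr hC hrC hG hW => ?_⟩
  have hrD : (r * C) * D ≤ 1 := by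
    calc (r * C) * D ≤ D⁻¹ * D := by gcongr
      _ = 1 := inv_mul_cancel₀ (by positivity)
  have hrc0 : 0 ≤ r * C := by positivity
  have hB : Ser (fun a q α => T (r • G a q α)) (r * ‖T‖ * C) := by
    have h := hG.clm (r • T)
    rw [norm_smul, Real.norm_of_nonneg hr] at h
    simpa using h
  have h1 : r * ‖T‖ * C ≤ 1/4 := by
    rw [hD] at hrD
    nlinarith [mul_nonneg hrc0 hS0]
  have h2 := ode_ser (B := fun a q α => T (r • G a q α)) (by positivity) h1 hB e W (fun a q α _ _ _ => hW a q α)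
  have h3 := (h2.clm S).mono (D := 1/2) (by
    rw [hD] at hrD
    nlinarith [mul_nonneg hrc0 hT0])
  simpa only [map_sub, he] using h3

lemma mat_ser (N : ℕ) : ∃ η > (0:ℝ), ∀ (r C : ℝ) (G W : ℝ → ℝ → ℝ → Matrix (Fin N) (Fin N) ℂ), 0 ≤ r → 0 ≤ C → r * C ≤ η → Ser G C →
      (∀ a q α, HasSum (fun n => dys (fun s => Rm N (r • G a q s)) 1 n α) (W a q α)) →
      Ser (fun a q α => Mv N (W a q α) - 1) (1/2) := by
  have := mat_complete N
  have e : Mv N 1 = 1 := by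
    ext1 v
    exact Matrix.one_mulVec v
  exact abs_ser (Rm N) (Mv N) 1 1 e

lemma slice (x₀ v₀ z : H) (hx₀ : ‖x₀‖ = 1) (hv₀ : ‖v₀‖ = 1) (hxv : ⟪x₀, v₀⟫ = 0)
    (hzx : ⟪z, x₀⟫ = 0) (hzv : ⟪z, v₀⟫ = 0)
    (A : H × H × H → Matrix (Fin N) (Fin N) ℂ) (hA : Continuous A)
    (f : H → (Fin N → ℂ)) (hf : Continuous f) (hsupp : ∀ x, 1 < ‖x‖ → f x = 0)
    (δ : ℝ) (hint : ∀ v : H, ‖v‖ = 1 → ‖v - v₀‖ < δ →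
      ∀ p : H, ⟪p, v⟫ = 0 → ‖p - x₀‖ < δ →
        ∀ U : ℝ → Matrix (Fin N) (Fin N) ℂ,
          (∀ t : ℝ, HasDerivAt U (-(A (p, v, p + t • v) * U t)) t) →
          U 0 = 1 → (∀ t : ℝ, IsUnit (U t)) →
          (∫ t : ℝ, (U t)⁻¹ *ᵥ f (p + t • v)) = 0)
    (r : ℝ) (hr : 0 < r) (hr1 : r ≤ 1)
    (hsm : ∀ (a q : ℝ), |a| ≤ r → |q| ≤ r → ‖vv x₀ v₀ a - v₀‖ < δ ∧ ‖pp x₀ v₀ z a q - x₀‖ < δ)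
    (hconc : ∀ W : ℝ → ℝ → ℝ → Matrix (Fin N) (Fin N) ℂ,
      (∀ a q α, HasSum (fun n => dys (fun s => Rm N (r • GG x₀ v₀ A (z, r * a, r^2 * q - r^2/16, r * s))) 1 n α) (W a q α)) →
      Ser (fun a q α => Mv N (W a q α) - 1) (1/2)) :
    ∀ α σ, 0 ≤ σ → f (pt x₀ v₀ z r α σ) = 0 := by
  have := mat_complete N
  set M : ℝ → ℝ → ℝ → Matrix (Fin N) (Fin N) ℂ := fun a q α => r • GG x₀ v₀ A (z, r * a, r^2 * q - r^2/16, r * α) with hM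
  have hMc : ∀ a q, Continuous (M a q) := by
    intro a q
    simp only [hM, GG]
    have h1 : Continuous fun α : ℝ => A (pp x₀ v₀ z (r * a) (r^2 * q - r^2/16), vv x₀ v₀ (r * a), PP x₀ v₀ z (r * a) (r^2 * q - r^2/16) (r * α)) := by
      refine hA.comp ?_
      unfold PP
      fun_prop
    exact Continuous.smul (continuous_const (y := r)) (Continuous.smul (continuous_const (y := 2 * √(1 + (r * a)^2))) h1)
  choose W U hW hU hWU hWs using fun a q => fund_pair (M a q) (hMc a q)
  have h0 : ∀ α σ, 1/16 < σ + α^2 → f (pt x₀ v₀ z r α σ) = 0 := by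
    intro α σ h
    apply hsupp
    have h1 := pt_norm x₀ v₀ z hx₀ hv₀ hxv hzx hzv r α σ
    have hr2 : 0 < r^2 := by positivity
    have h2 : 0 < r^2 * (σ + α^2 - 1/16) := mul_pos hr2 (by linarith)
    have h3 : 1 < ‖pt x₀ v₀ z r α σ‖^2 := by
      rw [h1]
      nlinarith [sq_nonneg ‖z‖, sq_nonneg (r^2 * (1/16 + α^2 - σ))]
    by_contra hc
    push Not at hc
    have := pow_le_one₀ (norm_nonneg _) hc (n := 2)
    linarith
  have hWser' := hconc W hWs
  refine core (fun α σ => f (pt x₀ v₀ z r α σ)) ?_ h0 (fun a q α => Mv N (W a q α)) ?_ ?_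
  · refine hf.comp ?_
    unfold pt
    fun_prop
  · exact hWser'
  · intro a ha q hq
    have hra : |r * a| ≤ r := by
      rw [abs_mul, abs_of_pos hr]
      have : |a| ≤ 1 := by rw [abs_le]; constructor <;> linarith [ha.1, ha.2]
      nlinarith
    have hrq : |r^2 * q - r^2/16| ≤ r := by
      have h2 : r^2 ≤ r := by nlinarith
      have h3 : 0 < r^2 := by positivity
      rw [abs_le]
      constructor <;> nlinarith [hq.1, hq.2]
    obtain ⟨hs1, hs2⟩ := hsm _ _ hra hrq
    have hvn := vv_norm x₀ v₀ hx₀ hv₀ hxv (r * a)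
    have hpv := pp_vv x₀ v₀ z hx₀ hv₀ hxv hzx hzv (r * a) (r^2 * q - r^2/16)
    have hh := hint _ hvn hs1 _ hpv hs2
    set v := vv x₀ v₀ (r * a) with hv
    set p := pp x₀ v₀ z (r * a) (r^2 * q - r^2/16) with hp
    set τ := tt (r * a) (r^2 * q - r^2/16) with hτ
    set κ := 2 * √(1 + (r * a)^2) * r with hκ
    have hsq : 0 < √(1 + (r * a)^2) := Real.sqrt_pos.mpr (sq_pos' _)
    have hκ0 : κ ≠ 0 := by positivity
    have hPt : ∀ α, p + (τ + κ * α) • v = pt x₀ v₀ z r α (q + (a - α)^2) := by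
      intro α
      rw [← pt_line, PP_eq]
      simp only [hκ, mul_assoc, ← hp, ← hv, ← hτ]
    have hMB : ∀ α, M a q α = κ • A (p, v, p + (τ + κ * α) • v) := by
      intro α
      simp only [hM, GG]
      rw [pt_line, ← hPt, smul_smul, ← hp, ← hv]
      congr 1
      rw [hκ]; ring
    have hl := line_lemma (fun t => A (p, v, p + t • v)) (fun t => f (p + t • v)) (by fun_prop) (by
        refine HasCompactSupport.intro (isCompact_Icc (a := (-1:ℝ)) (b := 1)) fun t ht => ?_
        apply hsupp
        have h1 : ‖p + t • v‖^2 = ‖p‖^2 + t^2 := by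
          rw [norm_add_sq_real, inner_smul_right, hpv, norm_smul, hvn, Real.norm_eq_abs]
          simp
        have h2 : 1 < t^2 := by
          by_contra hc
          push Not at hc
          exact ht (abs_le.mp (abs_le_one_iff_mul_self_le_one.mpr (by nlinarith)))
        by_contra hc
        push Not at hc
        have := pow_le_one₀ (norm_nonneg _) hc (n := 2)
        nlinarith [sq_nonneg ‖p‖]) hh τ κ hκ0 (W a q) (U a q)
        (fun t => by rw [← hMB]; exact hW a q t) (fun t => by rw [← hMB]; exact hU a q t) (hWU a q)
    simp only [hPt] at hl
    rw [intervalIntegral.integral_eq_integral_of_support_subset]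
    · exact hl
    · intro α hα
      rw [Function.mem_support] at hα
      by_contra hc
      apply hα
      have h1 : f (pt x₀ v₀ z r α (q + (a - α)^2)) = 0 := by
        apply h0
        have h2 : 1/4 ≤ α^2 := by
          by_contra hcc
          push Not at hcc
          apply hc
          constructor <;> nlinarith
        nlinarith [hq.1, sq_nonneg (a - α)]
      simp only [h1, map_zero]

lemma main_abs (x₀ v₀ : H) (hx₀ : ‖x₀‖ = 1) (hv₀ : ‖v₀‖ = 1) (hxv : ⟪x₀, v₀⟫ = 0)
    (A : H × H × H → Matrix (Fin N) (Fin N) ℂ) (hA : AnalyticOnNhd ℝ A Set.univ)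
    (f : H → (Fin N → ℂ)) (hf : Continuous f) (hsupp : ∀ x, 1 < ‖x‖ → f x = 0)
    (δ : ℝ) (hδ : 0 < δ) (hint : ∀ v : H, ‖v‖ = 1 → ‖v - v₀‖ < δ →
      ∀ p : H, ⟪p, v⟫ = 0 → ‖p - x₀‖ < δ →
        ∀ U : ℝ → Matrix (Fin N) (Fin N) ℂ,
          (∀ t : ℝ, HasDerivAt U (-(A (p, v, p + t • v) * U t)) t) →
          U 0 = 1 → (∀ t : ℝ, IsUnit (U t)) →
          (∫ t : ℝ, (U t)⁻¹ *ᵥ f (p + t • v)) = 0) :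
    ∃ ε > (0 : ℝ), ∀ x : H, ‖x - x₀‖ < ε → f x = 0 := by
  have := mat_complete N
  have hAc : Continuous A := by
    rw [← continuousOn_univ]; exact hA.continuousOn
  obtain ⟨P, R, hP⟩ := GG_analytic x₀ v₀ A hA
  obtain ⟨r₁, hr₁, hsm⟩ := small_lines x₀ v₀ hδ
  obtain ⟨ρ', hρ', hρR⟩ := ENNReal.lt_iff_exists_nnreal_btwn.mp hP.r_pos
  set ρ : NNReal := ρ' / 8 with hρ
  have hρ8 : 8 * ρ = ρ' := by rw [hρ]; exact mul_div_cancel₀ _ (by norm_num)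
  have hρ0 : 0 < ρ := by
    have : 0 < ρ' := by exact_mod_cast hρ'
    positivity
  set C := ∑' n, ‖P n‖ * ((8 * ρ : NNReal) : ℝ) ^ n with hC
  have hC0 : 0 ≤ C := tsum_nonneg fun n => by positivity
  obtain ⟨η, hη, hmat⟩ := mat_ser N
  set D := (1 + C) / η with hD
  have hD0 : 0 < D := by positivity
  obtain ⟨r, hr, hrr⟩ : ∃ r : ℝ, 0 < r ∧ r ≤ 1 ∧ r ≤ r₁ ∧ r ≤ ρ ∧ r ≤ D⁻¹ := by
    refine ⟨min (min 1 r₁) (min (ρ:ℝ) D⁻¹), ?_, ?_, ?_, ?_, ?_⟩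
    · have : 0 < D⁻¹ := by positivity
      have : (0:ℝ) < ρ := by exact_mod_cast hρ0
      positivity
    · exact (min_le_left _ _).trans (min_le_left _ _)
    · exact (min_le_left _ _).trans (min_le_right _ _)
    · exact (min_le_right _ _).trans (min_le_left _ _)
    · exact (min_le_right _ _).trans (min_le_right _ _)
  obtain ⟨hr1, hr2, hr3, hr4⟩ := hrr
  have hrD : r * D ≤ 1 := by
    calc r * D ≤ D⁻¹ * D := by gcongr
      _ = 1 := inv_mul_cancel₀ (by positivity)
  have hrC : r * C ≤ η := by
    have e : D * η = 1 + C := by rw [hD]; field_simp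
    have : r * D * η ≤ 1 * η := by gcongr
    rw [mul_assoc, e] at this
    linarith
  have hrsq : r^2 ≤ r := by nlinarith
  have hmain : ∀ z : H, ⟪z, x₀⟫ = 0 → ⟪z, v₀⟫ = 0 → ‖z‖ ≤ r → ∀ α σ, 0 ≤ σ → f (pt x₀ v₀ z r α σ) = 0 := by
    intro z hzx hzv hz
    refine slice x₀ v₀ z hx₀ hv₀ hxv hzx hzv A hAc f hf hsupp δ hint r hr hr1
      (fun a q ha hq => hsm z a q (hz.trans hr2) (ha.trans hr2) (hq.trans hr2))
      (fun W hW => hmat r C _ W hr.le hC0 hrC ?_ hW)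
    · have h := Ser.ofAnalytic hP ρ (by rw [hρ8]; exact hρR)
        ![(z, 0, -(r^2/16), 0), (0, r, 0, 0), (0, 0, r^2, 0), (0, 0, 0, r)] (by
          intro d
          have hzr : ‖z‖ ≤ ρ := hz.trans hr3
          have hra : |r| ≤ ρ := by rw [abs_of_pos hr]; exact hr3
          have hrs : |r^2| ≤ ρ := by rw [abs_of_pos (by positivity)]; linarith
          have hrt : |r^2| / 16 ≤ ρ := by linarith [abs_nonneg (r^2)]
          have h0 : (0:ℝ) ≤ ρ := ρ.2
          fin_cases d
          · simp [Prod.norm_def, hzr]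
            linarith
          · simp [Prod.norm_def, hra]
          · simp [Prod.norm_def]
            linarith
          · simp [Prod.norm_def, hra])
      convert h using 4 with a q α
      congr 1
      ext <;> simp <;> ring
  refine ⟨r^2/16, by positivity, fun x hx => ?_⟩
  set w := x - x₀ with hw
  have hvx : ⟪v₀, x₀⟫ = 0 := by rw [real_inner_comm]; exact hxv
  have h1 : ⟪x₀, x₀⟫ = (1:ℝ) := by rw [real_inner_self_eq_norm_sq, hx₀]; norm_num
  have h2 : ⟪v₀, v₀⟫ = (1:ℝ) := by rw [real_inner_self_eq_norm_sq, hv₀]; norm_num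
  have hwx : |⟪w, x₀⟫| ≤ ‖w‖ := by
    have := abs_real_inner_le_norm w x₀
    rwa [hx₀, mul_one] at this
  have hwv : |⟪w, v₀⟫| ≤ ‖w‖ := by
    have := abs_real_inner_le_norm w v₀
    rwa [hv₀, mul_one] at this
  set z := w - ⟪w, x₀⟫ • x₀ - ⟪w, v₀⟫ • v₀ with hz
  have hzn : ‖z‖ ≤ r := by
    have h3 : ‖z‖ ≤ ‖w‖ + ‖w‖ + ‖w‖ := by
      calc ‖z‖ ≤ ‖w‖ + ‖⟪w, x₀⟫ • x₀‖ + ‖⟪w, v₀⟫ • v₀‖ :=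
            (norm_sub_le _ _).trans (by gcongr; exact norm_sub_le _ _)
        _ ≤ _ := by
            rw [norm_smul, norm_smul, hx₀, hv₀, mul_one, mul_one, Real.norm_eq_abs, Real.norm_eq_abs]
            gcongr
    linarith
  have hzx : ⟪z, x₀⟫ = 0 := by
    simp only [hz, inner_sub_left, inner_smul_left, h1, hvx, conj_trivial]; ring
  have hzv : ⟪z, v₀⟫ = 0 := by
    simp only [hz, inner_sub_left, inner_smul_left, h2, hxv, conj_trivial]; ring
  have hr0 : r ≠ 0 := hr.ne'
  have hfin := hmain z hzx hzv hzn (⟪w, v₀⟫ / (2 * r)) (1/16 + (⟪w, v₀⟫ / (2 * r))^2 + ⟪w, x₀⟫ / r^2) (by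
    have h3 : -(1/16) ≤ ⟪w, x₀⟫ / r^2 := by
      rw [le_div_iff₀ (by positivity)]
      have := (abs_le.mp hwx).1
      linarith
    have := sq_nonneg (⟪w, v₀⟫ / (2 * r))
    linarith)
  rw [← hfin]
  congr 1
  unfold pt
  have e1 : 1 - r^2 * (1/16 + (⟪w, v₀⟫ / (2 * r))^2 - (1/16 + (⟪w, v₀⟫ / (2 * r))^2 + ⟪w, x₀⟫ / r^2)) = 1 + ⟪w, x₀⟫ := by
    field_simp; ring
  have e2 : 2 * r * (⟪w, v₀⟫ / (2 * r)) = ⟪w, v₀⟫ := by field_simp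
  rw [e1, e2, hz, add_smul, one_smul]
  have : x = w + x₀ := by rw [hw]; abel
  rw [this]
  abel
end Final
end Helpers


open Matrix MeasureTheory
open scoped RealInnerProductSpace

attribute [local instance] Matrix.normedAddCommGroup Matrix.normedSpace

/-- Local injectivity of the attenuated ray transform with a real-analytic matrix
attenuation near a strictly convex boundary point of the closed unit ball in ℝⁿ: if the
attenuated line integrals vanish for all lines near the tangent line at the glancing
direction `(x₀, v₀)`, then `f` vanishes near `x₀`. -/
theorem attenuated_ray_transform_local_injective_ball
    (n N : ℕ) (hn : 2 ≤ n) (hN : 1 ≤ N)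
    (x₀ v₀ : EuclideanSpace ℝ (Fin n))
    (hx₀ : ‖x₀‖ = 1) (hv₀ : ‖v₀‖ = 1) (hx₀v₀ : ⟪x₀, v₀⟫ = 0)
    (A : EuclideanSpace ℝ (Fin n) × EuclideanSpace ℝ (Fin n) × EuclideanSpace ℝ (Fin n) →
      Matrix (Fin N) (Fin N) ℂ)
    (hAanalytic : AnalyticOnNhd ℝ A Set.univ)
    (f : EuclideanSpace ℝ (Fin n) → (Fin N → ℂ))
    (hf : Continuous f)
    (hsupp : Function.support f ⊆ Metric.closedBall (0 : EuclideanSpace ℝ (Fin n)) 1)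
    (hint : ∃ δ > (0 : ℝ), ∀ v : EuclideanSpace ℝ (Fin n), ‖v‖ = 1 → ‖v - v₀‖ < δ →
      ∀ p : EuclideanSpace ℝ (Fin n), ⟪p, v⟫ = 0 → ‖p - x₀‖ < δ →
        ∀ U : ℝ → Matrix (Fin N) (Fin N) ℂ,
          (∀ t : ℝ, HasDerivAt U (-(A (p, v, p + t • v) * U t)) t) →
          U 0 = 1 → (∀ t : ℝ, IsUnit (U t)) →
          (∫ t : ℝ, (U t)⁻¹ *ᵥ f (p + t • v)) = 0) :
    ∃ ε > (0 : ℝ), ∀ x : EuclideanSpace ℝ (Fin n), ‖x - x₀‖ < ε → f x = 0 := by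
  obtain ⟨δ, hδ, hint⟩ := hint
  refine main_abs x₀ v₀ hx₀ hv₀ hx₀v₀ A hAanalytic f hf (fun x hx => ?_) δ hδ hint
  by_contra hc
  have := hsupp (Function.mem_support.mpr hc)
  rw [mem_closedBall_zero_iff] at this
  linarith
end

section
/- Let n ≥ 2 and N ≥ 1. Fix x₀ ∈ ℝⁿ with |x₀| = 1 and a unit vector v₀ ∈ ℝⁿ with ⟪x₀, v₀⟫ = 0. Let Φ, Ψ : ℝⁿ → Matrix (Fin N) (Fin N) ℂ be real-analytic. Suppose there exists δ > 0 such that for every unit vector v ∈ ℝⁿ with |v − v₀| < δ and every p ∈ ℝⁿ with ⟪p, v⟫ = 0, |p − x₀| < δ, and |p| < 1, the following holds with a := √(1 − |p|²): whenever U, V : ℝ → Matrix (Fin N) (Fin N) ℂ are differentiable with U′(t) = −Φ(p + t v) · U(t) and V′(t) = −Ψ(p + t v) · V(t) for all t ∈ ℝ and U(a) = V(a) = Id, one has U(−a) = V(−a). Then Φ(x) = Ψ(x) for every x in the closed unit ball {x ∈ ℝⁿ : |x| ≤ 1}. -/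
open Matrix
open scoped RealInnerProductSpace

attribute [local instance] Matrix.normedAddCommGroup Matrix.normedSpace


section Generic
variable {E : Type*} [NormedAddCommGroup E] [NormedSpace ℝ E]

noncomputable def dysonTerm (A : ℝ → E →L[ℝ] E) (t₀ : ℝ) (u₀ : E) : ℕ → ℝ → E
  | 0 => fun _ => u₀
  | (k+1) => fun t => ∫ s in t₀..t, A s (dysonTerm A t₀ u₀ k s)

theorem dyson_cont [CompleteSpace E] (A : ℝ → E →L[ℝ] E) (hA : Continuous A) (t₀ : ℝ) (u₀ : E) (k : ℕ) :
    Continuous (dysonTerm A t₀ u₀ k) ∧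
      ∀ t, HasDerivAt (dysonTerm A t₀ u₀ (k+1)) (A t (dysonTerm A t₀ u₀ k t)) t := by
  have key : ∀ k, Continuous (dysonTerm A t₀ u₀ k) → ∀ t,
      HasDerivAt (dysonTerm A t₀ u₀ (k+1)) (A t (dysonTerm A t₀ u₀ k t)) t := by
    intro k hk t
    have hc : Continuous (fun s => A s (dysonTerm A t₀ u₀ k s)) := hA.clm_apply hk
    exact (hc.integral_hasStrictDerivAt t₀ t).hasDerivAt
  have hc : Continuous (dysonTerm A t₀ u₀ k) := by
    induction k with
    | zero => exact continuous_const
    | succ k ih => exact continuous_iff_continuousAt.2 fun t => (key k ih t).continuousAt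
  exact ⟨hc, key k hc⟩

theorem dyson_bound (A : ℝ → E →L[ℝ] E) (t₀ : ℝ) (u₀ : E)
    (R K : ℝ) (hK : 0 ≤ K) (hb : ∀ t, |t - t₀| ≤ R → ‖A t‖ ≤ K) (k : ℕ) :
    ∀ t, |t - t₀| ≤ R → ‖dysonTerm A t₀ u₀ k t‖ ≤ ‖u₀‖ * K ^ k * |t - t₀| ^ k / k.factorial := by
  induction k with
  | zero => intro t _; simp [dysonTerm]
  | succ k ih =>
    intro t ht
    have h1 : ‖dysonTerm A t₀ u₀ (k+1) t‖ ≤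
        ∫ s in Set.uIoc t₀ t, (‖u₀‖ * K ^ (k+1) / k.factorial) * |s - t₀| ^ k := by
      show ‖∫ s in t₀..t, A s (dysonTerm A t₀ u₀ k s)‖ ≤ _
      rw [intervalIntegral.norm_intervalIntegral_eq]
      apply MeasureTheory.norm_integral_le_of_norm_le
      · exact (Continuous.integrableOn_uIoc (by fun_prop))
      · refine (MeasureTheory.ae_restrict_iff' measurableSet_uIoc).2 (Filter.Eventually.of_forall ?_)
        intro s hs
        have hs' : |s - t₀| ≤ R := by
          refine le_trans ?_ ht
          exact Set.abs_sub_left_of_mem_uIcc (Set.uIoc_subset_uIcc hs)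
        calc ‖A s (dysonTerm A t₀ u₀ k s)‖ ≤ ‖A s‖ * ‖dysonTerm A t₀ u₀ k s‖ := (A s).le_opNorm _
          _ ≤ K * (‖u₀‖ * K ^ k * |s - t₀| ^ k / k.factorial) :=
            mul_le_mul (hb s hs') (ih s hs') (norm_nonneg _) hK
          _ = _ := by ring
    refine h1.trans (le_of_eq ?_)
    rw [MeasureTheory.integral_const_mul, integral_pow_abs_sub_uIoc, Nat.factorial_succ]
    push_cast
    field_simp

theorem linear_ode_exists [CompleteSpace E] (A : ℝ → E →L[ℝ] E) (hA : Continuous A) (t₀ : ℝ) (u₀ : E) :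
    ∃ U : ℝ → E, U t₀ = u₀ ∧ ∀ t, HasDerivAt U (A t (U t)) t := by
  have hsum : ∀ R : ℝ, 0 < R → ∃ K : ℝ, 0 ≤ K ∧ ∀ t, |t - t₀| ≤ R → ‖A t‖ ≤ K := by
    intro R hR
    obtain ⟨K, hK⟩ := (isCompact_closedBall t₀ R).exists_bound_of_continuousOn hA.continuousOn
    refine ⟨K, (norm_nonneg _).trans (hK t₀ (by simp [hR.le])), fun t ht => hK t ?_⟩
    simpa [Real.dist_eq] using ht
  have hs : ∀ (K R : ℝ), Summable (fun k : ℕ => ‖u₀‖ * K ^ k * R ^ k / k.factorial) := by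
    intro K R
    have := (Real.summable_pow_div_factorial (K * R)).mul_left ‖u₀‖
    refine this.congr fun k => ?_
    rw [mul_pow]; ring
  have hsmb : ∀ t, Summable (fun k => dysonTerm A t₀ u₀ k t) := by
    intro t
    obtain ⟨K, hK, hb⟩ := hsum (|t - t₀| + 1) (by positivity)
    exact Summable.of_norm_bounded (hs K (|t - t₀|))
      (fun k => dyson_bound A t₀ u₀ _ K hK hb k t (by linarith))
  have hz : ∀ k, dysonTerm A t₀ u₀ (k+1) t₀ = 0 := by intro k; simp [dysonTerm]
  refine ⟨fun t => ∑' k, dysonTerm A t₀ u₀ k t, ?_, ?_⟩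
  · show ∑' k, dysonTerm A t₀ u₀ k t₀ = u₀
    rw [tsum_eq_single 0]
    · rfl
    · intro k hk
      obtain ⟨j, rfl⟩ := Nat.exists_eq_succ_of_ne_zero hk
      exact hz j
  · intro t
    obtain ⟨K, hK, hb⟩ := hsum (|t - t₀| + 1) (by positivity)
    have key := hasDerivAt_tsum_of_isPreconnected (𝕜 := ℝ) (t := Metric.ball t₀ (|t - t₀| + 1))
      (g := fun k t => dysonTerm A t₀ u₀ (k+1) t) (g' := fun k t => A t (dysonTerm A t₀ u₀ k t))
      (u := fun k => K * (‖u₀‖ * K ^ k * (|t - t₀| + 1) ^ k / k.factorial)) (y₀ := t₀) (y := t)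
      ((hs K _).mul_left K) Metric.isOpen_ball (convex_ball _ _).isPreconnected
      (fun k y _ => (dyson_cont A hA t₀ u₀ k).2 y)
      (by
        intro k y hy
        rw [Metric.mem_ball, Real.dist_eq] at hy
        refine ((A y).le_opNorm _).trans (mul_le_mul (hb y hy.le) ?_ (norm_nonneg _) hK)
        refine (dyson_bound A t₀ u₀ _ K hK hb k y hy.le).trans ?_
        gcongr)
      (Metric.mem_ball_self (by positivity))
      (by simp [hz, summable_zero])
      (by simp [Real.dist_eq])
    have e1 : (fun t => ∑' k, dysonTerm A t₀ u₀ k t) =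
        fun t => u₀ + ∑' k, dysonTerm A t₀ u₀ (k+1) t := by
      funext s
      rw [(hsmb s).tsum_eq_zero_add]
      rfl
    have e2 : A t (∑' k, dysonTerm A t₀ u₀ k t) = ∑' k, A t (dysonTerm A t₀ u₀ k t) :=
      (A t).map_tsum (hsmb t)
    show HasDerivAt (fun t => ∑' k, dysonTerm A t₀ u₀ k t) (A t (∑' k, dysonTerm A t₀ u₀ k t)) t
    rw [e2, e1]
    exact key.const_add u₀

theorem ode_close (A : ℝ → E →L[ℝ] E) (a K : ℝ) (ha : 0 < a) (hK : 0 ≤ K)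
    (hb : ∀ t, |t| ≤ a → ‖A t‖ ≤ K) (haK : 4 * K * a ≤ 1) (U : ℝ → E)
    (hU : ∀ t, HasDerivAt U (A t (U t)) t) :
    ∀ t, |t| ≤ a → ‖U t - U a‖ ≤ 4 * K * a * ‖U a‖ := by
  have hc : Continuous U := continuous_iff_continuousAt.2 fun t => (hU t).continuousAt
  obtain ⟨t₁, ht₁, hmax⟩ := (isCompact_Icc (a := -a) (b := a)).exists_isMaxOn ⟨0, by simp [ha.le]⟩
    hc.norm.continuousOn
  have hM : ∀ t, |t| ≤ a → ‖U t‖ ≤ ‖U t₁‖ := fun t ht => hmax (abs_le.1 ht)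
  have h1 : ∀ t, |t| ≤ a → ‖U t - U a‖ ≤ 2 * K * a * ‖U t₁‖ := by
    intro t ht
    have := Convex.norm_image_sub_le_of_norm_hasDerivWithin_le (s := Set.Icc (-a) a) (f := U)
      (f' := fun t => A t (U t)) (C := K * ‖U t₁‖) (x := a) (y := t)
      (fun x _ => (hU x).hasDerivWithinAt)
      (fun x hx => ((A x).le_opNorm _).trans
        (mul_le_mul (hb x (abs_le.2 hx)) (hM x (abs_le.2 hx)) (norm_nonneg _) hK))
      (convex_Icc _ _) ⟨by linarith, le_rfl⟩ (abs_le.1 ht)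
    refine this.trans ?_
    have h2 : ‖t - a‖ ≤ 2 * a := by
      rw [Real.norm_eq_abs, abs_le]; have := abs_le.1 ht; constructor <;> linarith
    calc K * ‖U t₁‖ * ‖t - a‖ ≤ K * ‖U t₁‖ * (2 * a) := by gcongr
      _ = _ := by ring
  have h3 : ‖U t₁‖ ≤ 2 * ‖U a‖ := by
    have h4 := h1 t₁ (abs_le.2 ht₁)
    have h5 : ‖U t₁‖ ≤ ‖U t₁ - U a‖ + ‖U a‖ := by
      simpa using norm_add_le (U t₁ - U a) (U a)
    nlinarith [norm_nonneg (U t₁)]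
  intro t ht
  refine (h1 t ht).trans ?_
  calc 2 * K * a * ‖U t₁‖ ≤ 2 * K * a * (2 * ‖U a‖) := by gcongr
    _ = _ := by ring

theorem taylor_close (m : ℕ) : ∀ (f : ℕ → ℝ → E) (_ : ∀ j s, HasDerivAt (f j) (f (j+1) s) s)
    (_ : ∀ j < m, f j 0 = 0) (B : E) (ε η : ℝ) (_ : 0 ≤ ε)
    (_ : ∀ s ∈ Set.Icc (-η) 0, ‖f m s - B‖ ≤ ε),
    ∀ s ∈ Set.Icc (-η) 0, ‖f 0 s - (s ^ m / m.factorial) • B‖ ≤ ε * |s| ^ m := by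
  induction m with
  | zero => intro f _ _ B ε η _ hb s hs; simpa using hb s hs
  | succ m ih =>
    intro f hf h0 B ε η hε hb s hs
    have IH := ih (fun j => f (j+1)) (fun j s => hf (j+1) s) (fun j hj => h0 (j+1) (by omega)) B ε η hε hb
    have hd : ∀ x, HasDerivAt (fun s : ℝ => f 0 s - (s ^ (m+1) / (m+1).factorial) • B)
        (f 1 x - (x ^ m / m.factorial) • B) x := by
      intro x
      refine (hf 0 x).sub (HasDerivAt.smul_const ?_ B)
      have := (hasDerivAt_pow (m+1) x).div_const ((m+1).factorial : ℝ)
      convert this using 1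
      rw [Nat.factorial_succ]; push_cast
      field_simp
    have := Convex.norm_image_sub_le_of_norm_hasDerivWithin_le (s := Set.Icc s 0)
      (C := ε * |s| ^ m) (x := 0) (y := s) (fun x _ => (hd x).hasDerivWithinAt)
      (fun x hx => (IH x ⟨hs.1.trans hx.1, hx.2⟩).trans (by
        have : |x| ≤ |s| := by rw [abs_of_nonpos hx.2, abs_of_nonpos hs.2]; linarith [hx.1]
        gcongr))
      (convex_Icc _ _) ⟨hs.2, le_rfl⟩ ⟨le_rfl, hs.2⟩
    simp only [h0 0 (Nat.succ_pos m)] at this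
    simpa [pow_succ, mul_assoc] using this

theorem flat_zero (f : ℕ → ℝ → E) (hf : ∀ j s, HasDerivAt (f j) (f (j+1) s) s)
    (h0 : ∀ j, f j 0 = 0) (han : AnalyticOnNhd ℝ (f 0) Set.univ) : f 0 = 0 := by
  refine han.eq_of_eventuallyEq (z₀ := 0) (fun x _ => analyticAt_const) ?_
  by_contra hne
  obtain ⟨m, g, hg, hg0, hfg⟩ := ((han 0 trivial).exists_eventuallyEq_pow_smul_nonzero_iff).2 hne
  have hc : Continuous (f (m+1)) := continuous_iff_continuousAt.2 fun t => (hf (m+1) t).continuousAt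
  obtain ⟨C, hC⟩ := (isCompact_Icc (a := (-1:ℝ)) (b := 0)).exists_bound_of_continuousOn hc.continuousOn
  have hC0 : 0 ≤ C := (norm_nonneg _).trans (hC 0 (by simp))
  have hT := taylor_close (m+1) f hf (fun j _ => h0 j) 0 C 1 hC0 (by simpa using hC)
  have hle : ∀ᶠ s in nhdsWithin (0:ℝ) (Set.Iio 0), ‖g s‖ ≤ C * |s| := by
    have h1 : ∀ᶠ s in nhdsWithin (0:ℝ) (Set.Iio 0), s ∈ Set.Ioo (-1:ℝ) 0 :=
      Ioo_mem_nhdsLT (by norm_num)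
    filter_upwards [h1, hfg.filter_mono nhdsWithin_le_nhds] with s hs hs2
    have h3 := hT s ⟨hs.1.le, hs.2.le⟩
    rw [hs2] at h3
    simp only [sub_zero, smul_zero, norm_smul, norm_pow, Real.norm_eq_abs] at h3
    have hp : 0 < |s| ^ m := pow_pos (abs_pos.2 hs.2.ne) m
    rw [pow_succ] at h3
    refine le_of_mul_le_mul_left (h3.trans (le_of_eq ?_)) hp
    ring
  have l1 : Filter.Tendsto (fun s => ‖g s‖) (nhdsWithin (0:ℝ) (Set.Iio 0)) (nhds ‖g 0‖) :=
    (hg.continuousAt.norm.tendsto).mono_left nhdsWithin_le_nhds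
  have l2 : Filter.Tendsto (fun s : ℝ => C * |s|) (nhdsWithin (0:ℝ) (Set.Iio 0)) (nhds 0) := by
    have : Continuous (fun s : ℝ => C * |s|) := by fun_prop
    simpa using (this.tendsto 0).mono_left nhdsWithin_le_nhds
  have := le_of_tendsto_of_tendsto l1 l2 hle
  exact hg0 (norm_le_zero_iff.1 this)

variable {X : Type*} [NormedAddCommGroup X] [NormedSpace ℝ X]

noncomputable def eulerIter (D : X → E) : ℕ → X → E
  | 0 => D
  | (j+1) => fun x => fderiv ℝ (eulerIter D j) x x

theorem euler_analytic [CompleteSpace E] (D : X → E) (hD : AnalyticOnNhd ℝ D Set.univ) (j : ℕ) :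
    AnalyticOnNhd ℝ (eulerIter D j) Set.univ := by
  induction j with
  | zero => exact hD
  | succ j ih =>
    intro x hx
    have h := ((ContinuousLinearMap.id ℝ (X →L[ℝ] E)).analyticAt_bilinear
      (fderiv ℝ (eulerIter D j) x, x))
    exact h.comp (f := fun x => (fderiv ℝ (eulerIter D j) x, x))
      ((ih.fderiv x hx).prod analyticAt_id)

theorem euler_deriv [CompleteSpace E] (D : X → E) (hD : AnalyticOnNhd ℝ D Set.univ) (y : X) (j : ℕ) (s : ℝ) :
    HasDerivAt (fun s => eulerIter D j (Real.exp s • y)) (eulerIter D (j+1) (Real.exp s • y)) s := by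
  have h1 := (euler_analytic D hD j (Real.exp s • y) trivial).differentiableAt.hasFDerivAt
  exact h1.comp_hasDerivAt s ((Real.hasDerivAt_exp s).smul_const y)

theorem rolle_step [CompleteSpace E] (μ : E →L[ℝ] E →L[ℝ] E) (e : E)
    (hassoc : ∀ x y z, μ (μ x y) z = μ x (μ y z)) (hmul_e : ∀ x, μ x e = x)
    (Φ Ψ : X → E) (hΦ : Continuous Φ) (hΨ : Continuous Ψ)
    (p v : X) (a : ℝ) (ha : 0 < a)
    (hdata : ∀ U V : ℝ → E,
          (∀ t : ℝ, HasDerivAt U (-(μ (Φ (p + t • v)) (U t))) t) →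
          (∀ t : ℝ, HasDerivAt V (-(μ (Ψ (p + t • v)) (V t))) t) →
          U a = e → V a = e → U (-a) = V (-a))
    (K : ℝ) (hK : 0 ≤ K) (hKb : ∀ t : ℝ, |t| ≤ a → ‖μ.flip (Φ (p + t • v))‖ ≤ K ∧
      ‖μ (Ψ (p + t • v))‖ ≤ K) (haK : 4 * K * a ≤ 1)
    (l : E →L[ℝ] ℝ) :
    ∃ c ∈ Set.Ioo (-a) a, ∃ W V : E,
      ‖W - e‖ ≤ 4 * K * a * ‖e‖ ∧
      ‖V - e‖ ≤ 4 * K * a * ‖e‖ ∧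
      l (μ (μ W (Φ (p + c • v) - Ψ (p + c • v))) V) = 0 := by
  have hline : Continuous (fun t : ℝ => p + t • v) := by fun_prop
  obtain ⟨U, hUa, hU⟩ := linear_ode_exists (fun t => -μ (Φ (p + t • v)))
    (μ.continuous.comp (hΦ.comp hline)).neg a e
  obtain ⟨V, hVa, hV⟩ := linear_ode_exists (fun t => -μ (Ψ (p + t • v)))
    (μ.continuous.comp (hΨ.comp hline)).neg a e
  obtain ⟨W, hWa, hW⟩ := linear_ode_exists (fun t => μ.flip (Φ (p + t • v)))
    (μ.flip.continuous.comp (hΦ.comp hline)) a e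
  have hV1 := ode_close _ a K ha hK (fun t ht => by
    rw [norm_neg]; exact (hKb t ht).2) haK V hV
  have hW1 := ode_close _ a K ha hK (fun t ht => (hKb t ht).1) haK W hW
  rw [hVa] at hV1
  rw [hWa] at hW1
  have hU' : ∀ t : ℝ, HasDerivAt U (-(μ (Φ (p + t • v)) (U t))) t := hU
  have hV' : ∀ t : ℝ, HasDerivAt V (-(μ (Ψ (p + t • v)) (V t))) t := hV
  have hW' : ∀ t : ℝ, HasDerivAt W (μ (W t) (Φ (p + t • v))) t := hW
  have hmul : ∀ {U V : ℝ → E} {U' V' : E} {t : ℝ}, HasDerivAt U U' t → HasDerivAt V V' t →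
      HasDerivAt (fun t => μ (U t) (V t)) (μ U' (V t) + μ (U t) V') t := by
    intro U V U' V' t hU hV
    have h1 : HasDerivAt (fun t => μ (U t)) (μ U') t := μ.hasFDerivAt.comp_hasDerivAt t hU
    exact h1.clm_apply hV
  have hend := hdata U V hU' hV' hUa hVa
  have hWU : ∀ t, HasDerivAt (fun t => μ (W t) (U t)) 0 t := by
    intro t
    convert hmul (hW' t) (hU' t) using 1
    rw [map_neg, hassoc]; simp
  have hWU1 : μ (W (-a)) (U (-a)) = e := by
    have := is_const_of_deriv_eq_zero (f := fun t => μ (W t) (U t))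
      (fun t => (hWU t).differentiableAt) (fun t => (hWU t).deriv) (-a) a
    simpa [hWa, hUa, hmul_e] using this
  have hWV : ∀ t, HasDerivAt (fun t => l (μ (W t) (V t)))
      (l (μ (μ (W t) (Φ (p + t • v) - Ψ (p + t • v))) (V t))) t := by
    intro t
    have h := l.hasFDerivAt.comp_hasDerivAt t (hmul (hW' t) (hV' t))
    have heq : μ (μ (W t) (Φ (p + t • v) - Ψ (p + t • v))) (V t) =
        μ (μ (W t) (Φ (p + t • v))) (V t) + μ (W t) (-(μ (Ψ (p + t • v)) (V t))) := by
      rw [map_neg, map_sub, ← hassoc, map_sub, _root_.sub_eq_add_neg]; rfl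
    rw [heq]
    exact h
  obtain ⟨c, hc, hc0⟩ := exists_hasDerivAt_eq_zero (f := fun t => l (μ (W t) (V t)))
    (f' := fun t => l (μ (μ (W t) (Φ (p + t • v) - Ψ (p + t • v))) (V t)))
    (by linarith : -a < a)
    (fun t _ => (hWV t).continuousAt.continuousWithinAt)
    (by simp only [← hend, hWU1, hWa, hVa, hmul_e])
    (fun t _ => hWV t)
  have hca : |c| ≤ a := abs_le.2 ⟨hc.1.le, hc.2.le⟩
  exact ⟨c, hc, W c, V c, hW1 c hca, hV1 c hca, hc0⟩

end Generic

theorem core_uniqueness {X E : Type*} [NormedAddCommGroup X] [InnerProductSpace ℝ X]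
    [FiniteDimensional ℝ X] [NormedAddCommGroup E] [NormedSpace ℝ E] [FiniteDimensional ℝ E]
    (m₀ : E →ₗ[ℝ] E →ₗ[ℝ] E) (e : E)
    (hassoc : ∀ x y z, m₀ (m₀ x y) z = m₀ x (m₀ y z)) (hmul_e : ∀ x, m₀ x e = x)
    (he_mul : ∀ x, m₀ e x = x) (x₀ v₀ : X)
    (hx₀ : ‖x₀‖ = 1) (hv₀ : ‖v₀‖ = 1) (hx₀v₀ : ⟪x₀, v₀⟫ = 0)
    (Φ Ψ : X → E) (hΦ : AnalyticOnNhd ℝ Φ Set.univ) (hΨ : AnalyticOnNhd ℝ Ψ Set.univ)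
    (δ : ℝ) (hδ : 0 < δ)
    (hscat : ∀ v : X, ‖v‖ = 1 → ‖v - v₀‖ < δ →
      ∀ p : X, ⟪p, v⟫ = 0 → ‖p - x₀‖ < δ → ‖p‖ < 1 →
        ∀ U V : ℝ → E,
          (∀ t : ℝ, HasDerivAt U (-(m₀ (Φ (p + t • v)) (U t))) t) →
          (∀ t : ℝ, HasDerivAt V (-(m₀ (Ψ (p + t • v)) (V t))) t) →
          U (Real.sqrt (1 - ‖p‖ ^ 2)) = e → V (Real.sqrt (1 - ‖p‖ ^ 2)) = e →
          U (-Real.sqrt (1 - ‖p‖ ^ 2)) = V (-Real.sqrt (1 - ‖p‖ ^ 2))) :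
    Φ = Ψ := by
  have : CompleteSpace E := FiniteDimensional.complete ℝ E
  have : ProperSpace X := FiniteDimensional.proper ℝ X
  obtain ⟨μ, hμ⟩ : ∃ μ : E →L[ℝ] E →L[ℝ] E, ∀ x y, m₀ x y = μ x y :=
    ⟨(LinearMap.toContinuousLinearMap.toLinearMap ∘ₗ m₀).toContinuousLinearMap, fun x y => rfl⟩
  simp only [hμ] at hassoc hmul_e he_mul hscat
  have hΦc : Continuous Φ := continuous_iff_continuousAt.2 fun x => (hΦ x trivial).continuousAt
  have hΨc : Continuous Ψ := continuous_iff_continuousAt.2 fun x => (hΨ x trivial).continuousAt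
  set D : X → E := fun x => Φ x - Ψ x with hDdef
  have hD : AnalyticOnNhd ℝ D Set.univ := hΦ.sub hΨ
  have hx₀ne : x₀ ≠ 0 := by intro h; simp [h] at hx₀
  -- nearby tangent directions
  have hnear : ∃ η > (0 : ℝ), ∀ y : X, ‖y - x₀‖ < η → ‖y - x₀‖ < δ ∧
      v₀ - ⟪y, v₀⟫ • y ≠ 0 ∧
      ‖(‖v₀ - ⟪y, v₀⟫ • y‖⁻¹ • (v₀ - ⟪y, v₀⟫ • y)) - v₀‖ < δ := by
    have hw : Continuous (fun y : X => v₀ - ⟪y, v₀⟫ • y) := by fun_prop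
    have hw0 : v₀ - ⟪x₀, v₀⟫ • x₀ = v₀ := by simp [hx₀v₀]
    have hv0ne : v₀ ≠ 0 := by intro h; simp [h] at hv₀
    have h1 : ∀ᶠ y in nhds x₀, v₀ - ⟪y, v₀⟫ • y ≠ 0 :=
      hw.continuousAt.eventually_ne (by rw [hw0]; exact hv0ne)
    have h2c : ContinuousAt (fun y : X =>
        ‖(‖v₀ - ⟪y, v₀⟫ • y‖⁻¹ • (v₀ - ⟪y, v₀⟫ • y)) - v₀‖) x₀ := by
      refine (((hw.norm.continuousAt.inv₀ ?_).smul hw.continuousAt).sub continuousAt_const).norm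
      simp [hx₀v₀, hv₀]
    have h2 : ∀ᶠ y in nhds x₀, ‖(‖v₀ - ⟪y, v₀⟫ • y‖⁻¹ • (v₀ - ⟪y, v₀⟫ • y)) - v₀‖ < δ :=
      h2c.eventually_lt_const (by simpa [hx₀v₀, hv₀] using hδ)
    have h3 : ∀ᶠ y in nhds x₀, ‖y - x₀‖ < δ := by
      have : ContinuousAt (fun y : X => ‖y - x₀‖) x₀ := by fun_prop
      exact this.eventually_lt_const (by simpa using hδ)
    obtain ⟨η, hη, h⟩ := Metric.eventually_nhds_iff.1 (h3.and (h1.and h2))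
    exact ⟨η, hη, fun y hy => h (by rwa [dist_eq_norm])⟩
  obtain ⟨η, hη, hnear⟩ := hnear
  have hradial : ∀ z : X, z ≠ 0 → Real.exp (Real.log ‖z‖) • (‖z‖⁻¹ • z) = z := by
    intro z hz
    rw [Real.exp_log (norm_pos_iff.2 hz), smul_smul, mul_inv_cancel₀ (norm_ne_zero_iff.2 hz), one_smul]
  have hunit : ∀ z : X, z ≠ 0 → ‖‖z‖⁻¹ • z‖ = 1 := fun z hz => norm_smul_inv_norm (𝕜 := ℝ) hz
  have hnc : ∀ y : X, y ≠ 0 → ContinuousAt (fun z : X => ‖z‖⁻¹ • z) y := fun y hy =>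
    (continuousAt_id.norm.inv₀ (norm_ne_zero_iff.2 hy)).smul continuousAt_id
  by_cases H : ∀ j, ∀ y : X, ‖y‖ = 1 → ‖y - x₀‖ < η → eulerIter D j y = 0
  · -- infinite order vanishing
    have hcone : ∀ y : X, ‖y‖ = 1 → ‖y - x₀‖ < η → ∀ s : ℝ, D (Real.exp s • y) = 0 := by
      intro y hy hyη
      have := flat_zero (fun j s => eulerIter D j (Real.exp s • y))
        (fun j s => euler_deriv D hD y j s) (fun j => by simpa using H j y hy hyη)
        (by
          intro s _
          have h1 : AnalyticAt ℝ (fun s : ℝ => Real.exp s • y) s :=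
            analyticAt_rexp.smul analyticAt_const
          exact AnalyticAt.comp (f := fun s : ℝ => Real.exp s • y)
            (hD (Real.exp s • y) trivial) h1)
      exact fun s => congrFun this s
    have hev : D =ᶠ[nhds x₀] fun _ => 0 := by
      have h1 : ∀ᶠ z in nhds x₀, ‖‖z‖⁻¹ • z - x₀‖ < η :=
        ((hnc x₀ hx₀ne).sub continuousAt_const).norm.eventually_lt_const (by simpa [hx₀] using hη)
      filter_upwards [h1, eventually_ne_nhds hx₀ne] with z hz hz0
      rw [← hradial z hz0]
      exact hcone _ (hunit z hz0) hz _
    have hD0 := hD.eq_of_eventuallyEq (fun x _ => analyticAt_const) hev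
    funext x
    exact sub_eq_zero.1 (congrFun hD0 x)
  · exfalso
    push Not at H
    classical
    obtain ⟨y, hy, hyη, hyne⟩ := Nat.find_spec H
    have hmin : ∀ j < Nat.find H, ∀ y : X, ‖y‖ = 1 → ‖y - x₀‖ < η → eulerIter D j y = 0 := by
      intro j hj y hy hyη
      by_contra hne
      exact Nat.find_min H hj ⟨y, hy, hyη, hne⟩
    generalize Nat.find H = m at hyne hmin
    have hyn0 : y ≠ 0 := by intro h; simp [h] at hy
    obtain ⟨hyδ, hwne, hvδ⟩ := hnear y hyη
    set w := v₀ - ⟪y, v₀⟫ • y with hwdef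
    set v := ‖w‖⁻¹ • w with hvdef
    have hv1 : ‖v‖ = 1 := hunit w hwne
    have hyv : ⟪y, v⟫ = 0 := by
      rw [hvdef, hwdef, inner_smul_right, inner_sub_right, inner_smul_right,
        real_inner_self_eq_norm_sq, hy]
      ring
    set B := eulerIter D m y with hB
    obtain ⟨l, hl⟩ : ∃ l : E →L[ℝ] ℝ, l B ≠ 0 := SeparatingDual.exists_ne_zero hyne
    -- uniform bound
    obtain ⟨K, hKb⟩ := (isCompact_closedBall (0 : X) 1).exists_bound_of_continuousOn
      (f := fun x => ‖μ.flip (Φ x)‖ + ‖μ (Ψ x)‖)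
      ((((μ.flip.continuous.comp hΦc).norm).add ((μ.continuous.comp hΨc).norm)).continuousOn)
    have hK : 0 ≤ K := (norm_nonneg _).trans (hKb 0 (by simp))
    have hcont : Continuous (fun q : E × E × E => l (μ (μ q.1 q.2.2) q.2.1)) := by
      have h1 : Continuous (fun q : E × E × E => μ q.1 q.2.2) :=
        (μ.continuous.comp continuous_fst).clm_apply (by fun_prop)
      exact l.continuous.comp ((μ.continuous.comp h1).clm_apply (by fun_prop))
    have hclosed : IsClosed {q : E × E × E | l (μ (μ q.1 q.2.2) q.2.1) = 0} :=
      isClosed_eq hcont continuous_const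
    have hmem : ((e, e, ((m.factorial : ℝ)⁻¹) • B) : E × E × E) ∈
        {q : E × E × E | l (μ (μ q.1 q.2.2) q.2.1) = 0} := by
      rw [← hclosed.closure_eq, Metric.mem_closure_iff]
      intro ε hε
      -- continuity of the m-th Euler derivative
      have hFc : ContinuousAt (eulerIter D m) y := (euler_analytic D hD m y trivial).continuousAt
      obtain ⟨r, hr, hFr⟩ := Metric.continuousAt_iff.1 hFc (ε / 2) (by positivity)
      have hρ : ∃ ρ > (0 : ℝ), ∀ x : X, ‖x - y‖ < ρ → x ≠ 0 ∧
          ‖‖x‖⁻¹ • x - x₀‖ < η ∧ (1 - ‖x‖) + ‖‖x‖⁻¹ • x - y‖ < r := by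
        have h1 : ∀ᶠ z in nhds y, ‖‖z‖⁻¹ • z - x₀‖ < η :=
          ((hnc y hyn0).sub continuousAt_const).norm.eventually_lt_const (by simpa [hy] using hyη)
        have h2 : ∀ᶠ z in nhds y, (1 - ‖z‖) + ‖‖z‖⁻¹ • z - y‖ < r :=
          ((continuousAt_const.sub continuousAt_id.norm).add
            ((hnc y hyn0).sub continuousAt_const).norm).eventually_lt_const (by simpa [hy] using hr)
        obtain ⟨ρ, hρ, h⟩ := Metric.eventually_nhds_iff.1 ((eventually_ne_nhds hyn0).and (h1.and h2))
        exact ⟨ρ, hρ, fun z hz => h (by rwa [dist_eq_norm])⟩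
      obtain ⟨ρ, hρ, hxρ⟩ := hρ
      -- choice of chord
      have hsmall : ∀ f : ℝ → ℝ, Continuous f → ∀ b, f 0 < b →
          ∀ᶠ a in nhdsWithin (0:ℝ) (Set.Ioi 0), f a < b := fun f hf b hb =>
        (hf.continuousAt.eventually_lt_const hb).filter_mono nhdsWithin_le_nhds
      have e1 := hsmall (fun a => a) (by fun_prop) 1 (by norm_num)
      have e2 := hsmall (fun a => (1 - Real.sqrt (1 - a ^ 2)) + a) (by fun_prop) ρ (by simpa using hρ)
      have e3 := hsmall (fun a => 4 * K * a) (by fun_prop) 1 (by simp)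
      have e4 := hsmall (fun a => 4 * K * a * ‖e‖) (by fun_prop) ε (by simpa using hε)
      have e5 := hsmall (fun a => ‖Real.sqrt (1 - a ^ 2) • y - x₀‖) (by fun_prop) δ
        (by simpa using hyδ)
      obtain ⟨a, ha1, ha2, ha3, ha4, ha5, ha0⟩ :=
        (e1.and (e2.and (e3.and (e4.and (e5.and self_mem_nhdsWithin))))).exists
      replace ha0 : 0 < a := ha0
      set b := Real.sqrt (1 - a ^ 2) with hbdef
      have hb0 : 0 ≤ b := Real.sqrt_nonneg _
      have hb2 : b ^ 2 = 1 - a ^ 2 := Real.sq_sqrt (by nlinarith)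
      have hb1 : b < 1 := by nlinarith
      have hpn : ‖b • y‖ = b := by rw [norm_smul, hy, mul_one, Real.norm_of_nonneg hb0]
      have hsq : Real.sqrt (1 - ‖b • y‖ ^ 2) = a := by
        rw [hpn, hb2]; convert Real.sqrt_sq ha0.le using 2; ring
      have hpv : ⟪b • y, v⟫ = 0 := by rw [real_inner_smul_left, hyv, mul_zero]
      have hxn : ∀ t : ℝ, ‖b • y + t • v‖ ^ 2 = 1 - a ^ 2 + t ^ 2 := by
        intro t
        rw [norm_add_sq_real, hpn, real_inner_smul_right, hpv, norm_smul, hv1, hb2, mul_one,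
          Real.norm_eq_abs, sq_abs]
        ring
      have hdat := hscat v hv1 hvδ (b • y) hpv ha5 (by rw [hpn]; exact hb1)
      rw [hsq] at hdat
      obtain ⟨c, hc, W, V, hW, hV, h0⟩ := rolle_step μ e hassoc hmul_e Φ Ψ hΦc hΨc (b • y) v a ha0
        hdat K hK (by
          intro t ht
          have hx1 : b • y + t • v ∈ Metric.closedBall (0 : X) 1 := by
            rw [mem_closedBall_zero_iff]
            have h1 := hxn t
            have h2 : t ^ 2 ≤ a ^ 2 := sq_le_sq' (abs_le.1 ht).1 (abs_le.1 ht).2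
            have h3 := norm_nonneg (b • y + t • v)
            nlinarith
          have h4 := (le_abs_self _).trans (hKb _ hx1)
          constructor
          · linarith [norm_nonneg (μ (Ψ (b • y + t • v)))]
          · linarith [norm_nonneg (μ.flip (Φ (b • y + t • v)))]) ha3.le l
      set x := b • y + c • v with hxdef
      have hxlt : ‖x‖ < 1 := by
        have h1 := hxn c
        have h2 : c ^ 2 < a ^ 2 := sq_lt_sq' hc.1 hc.2
        nlinarith [norm_nonneg x]
      have hxy : ‖x - y‖ < ρ := by
        refine lt_of_le_of_lt ?_ ha2
        have h1 : x - y = (b - 1) • y + c • v := by rw [hxdef, sub_smul, one_smul]; abel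
        rw [h1]
        refine (norm_add_le _ _).trans ?_
        rw [norm_smul, norm_smul, hy, hv1, Real.norm_eq_abs, Real.norm_eq_abs,
          abs_of_nonpos (by linarith : b - 1 ≤ 0)]
        have := abs_le.2 ⟨hc.1.le, hc.2.le⟩
        linarith
      obtain ⟨hx0, hxη, hxr⟩ := hxρ x hxy
      have hs : Real.log ‖x‖ < 0 := Real.log_neg (norm_pos_iff.2 hx0) hxlt
      have hexp : Real.exp (Real.log ‖x‖) = ‖x‖ := Real.exp_log (norm_pos_iff.2 hx0)
      have hu1 := hunit x hx0
      have hT := taylor_close m (fun j s => eulerIter D j (Real.exp s • (‖x‖⁻¹ • x)))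
        (fun j s => euler_deriv D hD _ j s)
        (fun j hj => by simpa using hmin j hj _ hu1 hxη) B (ε / 2) (-Real.log ‖x‖)
        (by positivity)
        (by
          intro σ hσ
          rw [neg_neg] at hσ
          rw [← dist_eq_norm]
          refine (hFr ?_).le
          refine lt_of_le_of_lt ?_ hxr
          rw [dist_eq_norm]
          have h1 : Real.exp σ • (‖x‖⁻¹ • x) - y =
              (Real.exp σ - 1) • (‖x‖⁻¹ • x) + (‖x‖⁻¹ • x - y) := by
            rw [sub_smul, one_smul]; abel
          rw [h1]
          refine (norm_add_le _ _).trans ?_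
          gcongr
          have h2 : Real.exp σ ≤ 1 := Real.exp_le_one_iff.2 hσ.2
          have h3 : ‖x‖ ≤ Real.exp σ := by rw [← hexp]; exact Real.exp_le_exp.2 hσ.1
          rw [norm_smul, hu1, mul_one, Real.norm_eq_abs, abs_of_nonpos (by linarith)]
          linarith)
        (Real.log ‖x‖) ⟨by simp, hs.le⟩
      simp only [hradial x hx0] at hT
      set s := Real.log ‖x‖ with hsdef
      have hsm : (s ^ m) ≠ 0 := pow_ne_zero m hs.ne
      have hX : ‖(s ^ m)⁻¹ • D x - ((m.factorial : ℝ)⁻¹) • B‖ ≤ ε / 2 := by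
        have h1 : (s ^ m)⁻¹ • D x - ((m.factorial : ℝ)⁻¹) • B =
            (s ^ m)⁻¹ • (D x - (s ^ m / m.factorial) • B) := by
          rw [smul_sub (_ : ℝ) (D x), smul_smul]
          congr 2
          field_simp
        rw [h1, norm_smul, norm_inv, norm_pow, Real.norm_eq_abs]
        have h2 : 0 < |s| ^ m := pow_pos (abs_pos.2 hs.ne) m
        rw [inv_mul_le_iff₀ h2, mul_comm]
        exact hT
      refine ⟨(W, V, (s ^ m)⁻¹ • D x), ?_, ?_⟩
      · show l (μ (μ W ((s ^ m)⁻¹ • D x)) V) = 0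
        rw [map_smul, map_smul, _root_.smul_apply, map_smul]
        rw [show l (μ (μ W (D x)) V) = 0 from h0, smul_zero]
      · rw [dist_comm, Prod.dist_eq, Prod.dist_eq, max_lt_iff, max_lt_iff]
        simp only [dist_eq_norm]
        exact ⟨hW.trans_lt ha4, hV.trans_lt ha4, hX.trans_lt (by linarith)⟩
    have hfin : l (μ (μ e (((m.factorial : ℝ)⁻¹) • B)) e) = 0 := hmem
    rw [he_mul, hmul_e, map_smul, smul_eq_zero] at hfin
    rcases hfin with h | h
    · exact (inv_ne_zero (Nat.cast_ne_zero.2 (Nat.factorial_ne_zero m))) h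
    · exact hl h

/-- Global uniqueness for the nonabelian ray transform of real-analytic Higgs fields on
the closed unit ball in ℝⁿ from local scattering data near a single glancing direction
`(x₀, v₀)`: if the scattering data of `Φ` and `Ψ` agree along every line close to the
tangent line at `x₀`, then `Φ = Ψ` on the whole closed unit ball. -/
theorem nonabelian_ray_transform_higgs_uniqueness_ball
    (n N : ℕ) (hn : 2 ≤ n) (hN : 1 ≤ N)
    (x₀ v₀ : EuclideanSpace ℝ (Fin n))
    (hx₀ : ‖x₀‖ = 1) (hv₀ : ‖v₀‖ = 1) (hx₀v₀ : ⟪x₀, v₀⟫ = 0)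
    (Φ Ψ : EuclideanSpace ℝ (Fin n) → Matrix (Fin N) (Fin N) ℂ)
    (hΦ : AnalyticOnNhd ℝ Φ Set.univ)
    (hΨ : AnalyticOnNhd ℝ Ψ Set.univ)
    (hscat : ∃ δ > (0 : ℝ), ∀ v : EuclideanSpace ℝ (Fin n), ‖v‖ = 1 → ‖v - v₀‖ < δ →
      ∀ p : EuclideanSpace ℝ (Fin n), ⟪p, v⟫ = 0 → ‖p - x₀‖ < δ → ‖p‖ < 1 →
        ∀ U V : ℝ → Matrix (Fin N) (Fin N) ℂ,
          (∀ t : ℝ, HasDerivAt U (-(Φ (p + t • v) * U t)) t) →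
          (∀ t : ℝ, HasDerivAt V (-(Ψ (p + t • v) * V t)) t) →
          U (Real.sqrt (1 - ‖p‖ ^ 2)) = 1 → V (Real.sqrt (1 - ‖p‖ ^ 2)) = 1 →
          U (-Real.sqrt (1 - ‖p‖ ^ 2)) = V (-Real.sqrt (1 - ‖p‖ ^ 2))) :
    ∀ x : EuclideanSpace ℝ (Fin n), ‖x‖ ≤ 1 → Φ x = Ψ x := by
  obtain ⟨δ, hδ, hs⟩ := hscat
  have hcore : Φ = Ψ := core_uniqueness (LinearMap.mul ℝ (Matrix (Fin N) (Fin N) ℂ)) 1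
    (fun x y z => Matrix.mul_assoc x y z) (fun x => Matrix.mul_one x) (fun x => Matrix.one_mul x)
    x₀ v₀ hx₀ hv₀ hx₀v₀ Φ Ψ hΦ hΨ δ hδ hs
  exact fun x _ => congrFun hcore x
end
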